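/- arXiv:2206.11735 — 4 statements merged into one kernel-verified Lean document; each statement's English description precedes it below -/
import Mathlib

section
/- Assume that for all real t₀ < t₁ there exists t ∈ (t₀, t₁) with rank Θ_n(t) = n (total controllability on every interval). Let s ∈ ℝ, let Π_s be a symmetric n×n matrix, and let I_s ⊂ ℝ be the maximal interval of existence of the solution of the Riccati equation Π' = −AᵀΠ − ΠA + ΠBBᵀΠ − Q with Π(s) = Π_s. Then I_s = (t₀*, t₁*) where t₀* = inf{t : t < s, −Φ₁₂(t,s)⁻¹Φ₁₁(t,s) ≺ Π_s} and t₁* = sup{t : t > s, −Φ₁₂(t,s)⁻¹Φ₁₁(t,s) ≻ Π_s} (infimum and supremum taken in the extended reals). -/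
open Matrix

/-- `IsSTM F Φ`: `Φ` is the state transition matrix of `F`, i.e. for each fixed `s`,
`t ↦ Φ t s` solves `X' = F t * X`, `X s = 1` (derivatives taken entrywise). -/
def IsSTM {ι : Type*} [Fintype ι] [DecidableEq ι] (F : ℝ → Matrix ι ι ℝ)
    (Φ : ℝ → ℝ → Matrix ι ι ℝ) : Prop :=
  (∀ s : ℝ, Φ s s = 1) ∧
  ∀ (s t : ℝ) (i j : ι), HasDerivAt (fun t' : ℝ => Φ t' s i j) ((F t * Φ t s) i j) t

/-- `IsCtrbMatSeq A B Γ`: `Γ 0 = B` and `Γ k = -A Γ (k-1) + Γ' (k-1)` for `1 ≤ k ≤ n`,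
i.e. the derivative of each entry of `Γ k` is the corresponding entry of `Γ (k+1) + A * Γ k`,
for `k < n`. -/
def IsCtrbMatSeq {n p : ℕ} (A : ℝ → Matrix (Fin n) (Fin n) ℝ)
    (B : ℝ → Matrix (Fin n) (Fin p) ℝ) (Γ : ℕ → ℝ → Matrix (Fin n) (Fin p) ℝ) : Prop :=
  Γ 0 = B ∧
  ∀ k < n, ∀ (t : ℝ) (i : Fin n) (j : Fin p),
    HasDerivAt (fun τ : ℝ => Γ k τ i j) ((Γ (k + 1) t + A t * Γ k t) i j) t

/-- The controllability matrix `Θₙ(t) = [Γ₀(t) Γ₁(t) ⋯ Γ_{n−1}(t)]`. -/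
def ctrbMat {n p : ℕ} (Γ : ℕ → ℝ → Matrix (Fin n) (Fin p) ℝ) (t : ℝ) :
    Matrix (Fin n) (Fin n × Fin p) ℝ :=
  Matrix.of fun i kj => Γ (kj.1 : ℕ) t i kj.2

/-- Total controllability of `(A(t), B(t))` on `[0,1]`. -/
def TotallyControllable {n p : ℕ} (Γ : ℕ → ℝ → Matrix (Fin n) (Fin p) ℝ) : Prop :=
  ∀ t₀ t₁ : ℝ, 0 ≤ t₀ → t₀ < t₁ → t₁ ≤ 1 →
    ∃ t ∈ Set.Ioo t₀ t₁, (ctrbMat Γ t).rank = n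


/-- `P` solves the Riccati equation `P' = -AᵀP - PA + PBBᵀP - Q` at the point `t`
(derivatives taken entrywise). -/
def IsRiccatiSolAt {n p : ℕ} (A Q : ℝ → Matrix (Fin n) (Fin n) ℝ)
    (B : ℝ → Matrix (Fin n) (Fin p) ℝ) (P : ℝ → Matrix (Fin n) (Fin n) ℝ)
    (t : ℝ) : Prop :=
  ∀ (i j : Fin n),
    HasDerivAt (fun τ : ℝ => P τ i j)
      ((-(A t)ᵀ * P t - P t * A t + P t * (B t * (B t)ᵀ) * P t - Q t) i j) t

/-!
Write `R = BBᵀ`, let `(U, V)` and `(Y, Z)` be the solutions of the Hamiltonian system starting at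
time `s` from `(1, Πₛ)` and `(0, 1)`. Wherever `U` is invertible, `V U⁻¹` solves the Riccati
equation; conversely, a Riccati solution `P` on an interval around `s` forces `V = P U` there, and
the Wronskian identity `UᵀZ - VᵀY = 1` then makes `U` invertible. So the question is how far from
`s` the matrix `U` stays invertible.

Since `(YᵀZ)' = -(ZᵀRZ + YᵀQY)` is negative semidefinite, a vector killed by `Y` at two times gives
a costate which is not seen by `B` in between, and controllability rules this out: `Y` is invertible
away from `s`. The same identities give `(U⁻¹Y)' = -U⁻¹RU⁻ᵀ` and `(Y⁻¹U)' = Y⁻¹RY⁻ᵀ`. The two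
threshold conditions say that `Y⁻¹U` is positive definite, for `t < s`, respectively negative
definite, for `t > s`. As `Y⁻¹U` is nondecreasing, each of them persists as `t` moves towards `s`,
so `U` is invertible from `s` up to the threshold. Conversely, as long as `U` is invertible, `U⁻¹Y`
is nonincreasing and vanishes at `s`, hence it is definite at every other time, and so is its
inverse.
-/

section MatrixCalculus

variable {𝕜 ι κ l : Type*} [NontriviallyNormedField 𝕜] {t : 𝕜}

lemma hasDerivAt_matrix [Finite ι] [Finite κ] {F : 𝕜 → Matrix ι κ 𝕜} {F' : Matrix ι κ 𝕜} :
    HasDerivAt F F' t ↔ ∀ i j, HasDerivAt (fun τ => F τ i j) (F' i j) t := by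
  have := Fintype.ofFinite ι
  have := Fintype.ofFinite κ
  exact hasDerivAt_pi.trans (forall_congr' fun _ => hasDerivAt_pi)

lemma hasDerivAt_matrix_transpose [Finite ι] [Finite κ] {F : 𝕜 → Matrix ι κ 𝕜}
    {F' : Matrix ι κ 𝕜} (hF : HasDerivAt F F' t) : HasDerivAt (fun τ => (F τ)ᵀ) F'ᵀ t :=
  hasDerivAt_matrix.2 fun i j => hasDerivAt_matrix.1 hF j i

lemma hasDerivAt_dotProduct [Fintype ι] {u v : 𝕜 → ι → 𝕜} {u' v' : ι → 𝕜}
    (hu : HasDerivAt u u' t) (hv : HasDerivAt v v' t) :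
    HasDerivAt (fun τ => u τ ⬝ᵥ v τ) (u' ⬝ᵥ v t + u t ⬝ᵥ v') t := by
  simp only [dotProduct, ← Finset.sum_add_distrib]
  exact HasDerivAt.fun_sum fun i _ => (hasDerivAt_pi.1 hu i).mul (hasDerivAt_pi.1 hv i)

lemma hasDerivAt_vecMul [Fintype ι] [Finite κ] {v : 𝕜 → ι → 𝕜} {v' : ι → 𝕜}
    {F : 𝕜 → Matrix ι κ 𝕜} {F' : Matrix ι κ 𝕜} (hv : HasDerivAt v v' t)
    (hF : HasDerivAt F F' t) :
    HasDerivAt (fun τ => v τ ᵥ* F τ) (v' ᵥ* F t + v t ᵥ* F') t := by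
  have := Fintype.ofFinite κ
  exact hasDerivAt_pi.2 fun j =>
    hasDerivAt_dotProduct hv (hasDerivAt_pi.1 (hasDerivAt_matrix_transpose hF) j)

lemma hasDerivAt_mulVec_const [Finite ι] [Fintype κ] {F : 𝕜 → Matrix ι κ 𝕜}
    {F' : Matrix ι κ 𝕜} (hF : HasDerivAt F F' t) (x : κ → 𝕜) :
    HasDerivAt (fun τ => F τ *ᵥ x) (F' *ᵥ x) t := by
  simpa only [vecMul_transpose, mulVec_zero, zero_add] using
    hasDerivAt_vecMul (hasDerivAt_const t x) (hasDerivAt_matrix_transpose hF)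

lemma hasDerivAt_matrix_mul [Finite ι] [Fintype κ] [Finite l] {F : 𝕜 → Matrix ι κ 𝕜}
    {G : 𝕜 → Matrix κ l 𝕜} {F' : Matrix ι κ 𝕜} {G' : Matrix κ l 𝕜}
    (hF : HasDerivAt F F' t) (hG : HasDerivAt G G' t) :
    HasDerivAt (fun τ => F τ * G τ) (F' * G t + F t * G') t :=
  hasDerivAt_matrix.2 fun i j => hasDerivAt_dotProduct (hasDerivAt_pi.2 (hasDerivAt_matrix.1 hF i))
    (hasDerivAt_pi.2 fun k => hasDerivAt_matrix.1 hG k j)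

lemma hasDerivAt_matrix_inv [Fintype ι] [DecidableEq ι] {F : ℝ → Matrix ι ι ℝ}
    {F' : Matrix ι ι ℝ} {t : ℝ} (hF : HasDerivAt F F' t) (hu : IsUnit (F t)) :
    HasDerivAt (fun τ => (F τ)⁻¹) (-((F t)⁻¹ * F' * (F t)⁻¹)) t := by
  let _ : NormedRing (Matrix ι ι ℝ) := Matrix.linftyOpNormedRing
  let _ : NormedAlgebra ℝ (Matrix ι ι ℝ) := Matrix.linftyOpNormedAlgebra
  obtain ⟨u, hu⟩ := hu
  have hinv := (hu ▸ hasFDerivAt_ringInverse (𝕜 := ℝ) u).comp_hasDerivAt t hF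
  simp only [nonsing_inv_eq_ringInverse, ← hu, Ring.inverse_unit]
  exact hinv

end MatrixCalculus

lemma eq_zero_of_hasDerivAt_mul {𝔸 : Type*} [NormedRing 𝔸] [NormedAlgebra ℝ 𝔸] {K E : ℝ → 𝔸}
    {I : Set ℝ} (hI : I.OrdConnected) (hK : ContinuousOn K I)
    (hE : ∀ τ ∈ I, HasDerivAt E (K τ * E τ) τ) {s t : ℝ} (hs : s ∈ I) (ht : t ∈ I)
    (h0 : E s = 0) : E t = 0 := by
  have hsub : Set.uIcc s t ⊆ I := hI.uIcc_subset hs ht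
  obtain ⟨C, hC⟩ := isCompact_uIcc.exists_bound_of_continuousOn (hK.mono hsub)
  have hlip (τ : ℝ) (hτ : τ ∈ Set.uIcc s t) :
      LipschitzOnWith C.toNNReal (fun X => K τ * X) Set.univ := by
    refine LipschitzOnWith.of_dist_le_mul fun X _ Y _ => ?_
    rw [dist_eq_norm, dist_eq_norm, ← mul_sub]
    refine (norm_mul_le _ _).trans ?_
    gcongr
    exact (hC τ hτ).trans (Real.le_coe_toNNReal C)
  have hcont : ContinuousOn E (Set.uIcc s t) := fun τ hτ =>
    (hE τ (hsub hτ)).continuousAt.continuousWithinAt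
  have hzero (τ : ℝ) : HasDerivAt (fun _ => (0 : 𝔸)) (K τ * 0) τ := by
    simpa only [mul_zero] using hasDerivAt_const τ (0 : 𝔸)
  rcases le_total s t with hst | hst
  · rw [Set.uIcc_of_le hst] at hsub hlip hcont
    exact ODE_solution_unique_of_mem_Icc_right (fun τ hτ => hlip τ (Set.Ico_subset_Icc_self hτ))
      hcont (fun τ hτ => (hE τ (hsub (Set.Ico_subset_Icc_self hτ))).hasDerivWithinAt)
      (fun _ _ => trivial) continuousOn_const (fun τ _ => (hzero τ).hasDerivWithinAt)
      (fun _ _ => trivial) h0 (Set.right_mem_Icc.2 hst)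
  · rw [Set.uIcc_of_ge hst] at hsub hlip hcont
    exact ODE_solution_unique_of_mem_Icc_left (fun τ hτ => hlip τ (Set.Ioc_subset_Icc_self hτ))
      hcont (fun τ hτ => (hE τ (hsub (Set.Ioc_subset_Icc_self hτ))).hasDerivWithinAt)
      (fun _ _ => trivial) continuousOn_const (fun τ _ => (hzero τ).hasDerivWithinAt)
      (fun _ _ => trivial) h0 (Set.left_mem_Icc.2 hst)

section DerivativeSign

variable {ι : Type*} [Finite ι] {F F' : ℝ → Matrix ι ι ℝ} {a b : ℝ}

lemma isHermitian_sub_of_hasDerivAt (hab : a ≤ b)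
    (hF : ∀ t ∈ Set.Icc a b, HasDerivAt F (F' t) t)
    (hF' : ∀ t ∈ Set.Icc a b, (F' t).IsHermitian) : (F b - F a).IsHermitian := by
  have hskew (i j : ι) (t : ℝ) (ht : t ∈ Set.Icc a b) :
      HasDerivAt (fun τ => F τ j i - F τ i j) 0 t := by
    have hentry := hasDerivAt_matrix.1 (hF t ht)
    refine ((hentry j i).sub (hentry i j)).congr_deriv ?_
    rw [← (hF' t ht).apply i j, star_trivial, sub_self]
  refine IsHermitian.ext fun i j => ?_
  have hconst := constant_of_has_deriv_right_zero
    (fun t ht => (hskew i j t ht).continuousAt.continuousWithinAt)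
    (fun t ht => (hskew i j t (Set.Ico_subset_Icc_self ht)).hasDerivWithinAt) b
    (Set.right_mem_Icc.2 hab)
  simp only [Matrix.sub_apply, star_trivial]
  linarith

lemma posSemidef_sub_of_hasDerivAt (hab : a ≤ b)
    (hF : ∀ t ∈ Set.Icc a b, HasDerivAt F (F' t) t)
    (hF' : ∀ t ∈ Set.Icc a b, (F' t).PosSemidef) : (F b - F a).PosSemidef := by
  have := Fintype.ofFinite ι
  refine .of_dotProduct_mulVec_nonneg
    (isHermitian_sub_of_hasDerivAt hab hF fun t ht => (hF' t ht).isHermitian) fun x => ?_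
  have hquad (t : ℝ) (ht : t ∈ Set.Icc a b) :
      HasDerivAt (fun τ => x ⬝ᵥ (F τ *ᵥ x)) (x ⬝ᵥ (F' t *ᵥ x)) t := by
    simpa only [zero_dotProduct, zero_add] using
      hasDerivAt_dotProduct (hasDerivAt_const t x) (hasDerivAt_mulVec_const (hF t ht) x)
  have hmono := monotoneOn_of_hasDerivWithinAt_nonneg (convex_Icc a b)
    (fun t ht => (hquad t ht).continuousAt.continuousWithinAt)
    (fun t ht => (hquad t (interior_subset ht)).hasDerivWithinAt)
    (fun t ht => (hF' t (interior_subset ht)).dotProduct_mulVec_nonneg x)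
  simpa only [star_trivial, sub_mulVec, dotProduct_sub, sub_nonneg] using
    hmono (Set.left_mem_Icc.2 hab) (Set.right_mem_Icc.2 hab) hab

end DerivativeSign

lemma vecMul_injective_of_rank_eq_card {K ι κ : Type*} [Field K] [Fintype ι] [Fintype κ]
    {M : Matrix ι κ K} (hM : M.rank = Fintype.card ι) : Function.Injective (· ᵥ* M) := by
  rw [vecMul_injective_iff, linearIndependent_iff_card_eq_finrank_span, ← hM,
    rank_eq_finrank_span_row, Set.finrank]

lemma isUnit_iff_forall_mulVec_eq_zero {K ι : Type*} [Field K] [Fintype ι] [DecidableEq ι]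
    {M : Matrix ι ι K} : IsUnit M ↔ ∀ x, M *ᵥ x = 0 → x = 0 := by
  rw [← mulVec_injective_iff_isUnit]
  exact injective_iff_map_eq_zero M.mulVecLin

lemma sInf_coe_image_le_of_forall_mem {S : Set ℝ} {a : EReal} {s : ℝ} (has : a < s)
    (h : ∀ t : ℝ, a < t → t < s → t ∈ S) : sInf ((fun x : ℝ => (x : EReal)) '' S) ≤ a := by
  refine le_of_forall_gt_imp_ge_of_dense fun c hac => ?_
  obtain ⟨t, hat, ht⟩ := EReal.lt_iff_exists_real_btwn.1 (lt_min hac has)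
  obtain ⟨htc, hts⟩ := lt_min_iff.1 ht
  exact (sInf_le (Set.mem_image_of_mem _ (h t hat (by exact_mod_cast hts)))).trans htc.le

lemma le_sSup_coe_image_of_forall_mem {S : Set ℝ} {b : EReal} {s : ℝ} (hsb : s < b)
    (h : ∀ t : ℝ, s < t → t < b → t ∈ S) : b ≤ sSup ((fun x : ℝ => (x : EReal)) '' S) := by
  refine le_of_forall_lt_imp_le_of_dense fun c hcb => ?_
  obtain ⟨t, ht, htb⟩ := EReal.lt_iff_exists_real_btwn.1 (max_lt hcb hsb)
  obtain ⟨hct, hst⟩ := max_lt_iff.1 ht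
  exact hct.le.trans (le_sSup (Set.mem_image_of_mem _ (h t (by exact_mod_cast hst) htb)))

/-- The right-hand side `-AᵀP - PA + PRP - Q` of the matrix Riccati equation, with a general
quadratic coefficient `R` in place of `BBᵀ`. -/
def riccatiField {ι : Type*} [Fintype ι] (A R Q P : Matrix ι ι ℝ) : Matrix ι ι ℝ :=
  -Aᵀ * P - P * A + P * R * P - Q

/-- `(U, V)` solves the linear Hamiltonian system `U' = AU - RV`, `V' = -QU - AᵀV`; each column of
the pair is a solution with state `U` and costate `V`. -/
structure IsHamiltonianSolution {ι κ : Type*} [Fintype ι] [Fintype κ]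
    (A R Q : ℝ → Matrix ι ι ℝ) (U V : ℝ → Matrix ι κ ℝ) : Prop where
  state : ∀ t, HasDerivAt U (A t * U t - R t * V t) t
  costate : ∀ t, HasDerivAt V (-(Q t * U t) - (A t)ᵀ * V t) t

/-- The Hamiltonian system with coefficients `A`, `R` is identically normal: on no nonempty open
interval does it have a solution with vanishing state and nonzero costate. Such a costate `v`
satisfies `v' = -Aᵀv` and `Rv = 0`; it is written here as a row vector. -/
def IsIdenticallyNormal {ι : Type*} [Fintype ι] (A R : ℝ → Matrix ι ι ℝ) : Prop :=
  ∀ (a b : ℝ) (v : ℝ → ι → ℝ), (∀ t ∈ Set.Ioo a b, HasDerivAt v (-(v t ᵥ* A t)) t) →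
    (∀ t ∈ Set.Ioo a b, R t *ᵥ v t = 0) → ∀ t ∈ Set.Ioo a b, v t = 0

section Hamiltonian

-- `HasDerivAt` depends only on the topology; the entrywise norm opens up its normed-space API.
attribute [local instance] Matrix.normedAddCommGroup Matrix.normedSpace

variable {ι κ : Type*} [Fintype ι] [Fintype κ] {A R Q : ℝ → Matrix ι ι ℝ}

namespace IsHamiltonianSolution

lemma add {U₁ V₁ U₂ V₂ : ℝ → Matrix ι κ ℝ} (h₁ : IsHamiltonianSolution A R Q U₁ V₁)
    (h₂ : IsHamiltonianSolution A R Q U₂ V₂) :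
    IsHamiltonianSolution A R Q (fun t => U₁ t + U₂ t) (fun t => V₁ t + V₂ t) where
  state t := ((h₁.state t).add (h₂.state t)).congr_deriv (by simp only [Matrix.mul_add]; abel)
  costate t := ((h₁.costate t).add (h₂.costate t)).congr_deriv (by simp only [Matrix.mul_add]; abel)

lemma neg {U V : ℝ → Matrix ι κ ℝ} (h : IsHamiltonianSolution A R Q U V) :
    IsHamiltonianSolution A R Q (fun t => -U t) (fun t => -V t) where
  state t := (h.state t).neg.congr_deriv (by simp only [Matrix.mul_neg]; abel)
  costate t := (h.costate t).neg.congr_deriv (by simp only [Matrix.mul_neg]; abel)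

lemma mul_const {l : Type*} [Fintype l] {U V : ℝ → Matrix ι κ ℝ}
    (h : IsHamiltonianSolution A R Q U V) (C : Matrix κ l ℝ) :
    IsHamiltonianSolution A R Q (fun t => U t * C) (fun t => V t * C) where
  state t := (hasDerivAt_matrix_mul (h.state t) (hasDerivAt_const t C)).congr_deriv (by
    simp only [Matrix.mul_zero, add_zero, Matrix.sub_mul, Matrix.mul_assoc])
  costate t := (hasDerivAt_matrix_mul (h.costate t) (hasDerivAt_const t C)).congr_deriv (by
    simp only [Matrix.mul_zero, add_zero, Matrix.sub_mul, Matrix.neg_mul, Matrix.mul_assoc])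

lemma hasDerivAt_state_transpose_mul_costate {κ₁ κ₂ : Type*} [Fintype κ₁] [Fintype κ₂]
    {U₁ V₁ : ℝ → Matrix ι κ₁ ℝ} {U₂ V₂ : ℝ → Matrix ι κ₂ ℝ}
    (h₁ : IsHamiltonianSolution A R Q U₁ V₁) (h₂ : IsHamiltonianSolution A R Q U₂ V₂) (t : ℝ) :
    HasDerivAt (fun τ => (U₁ τ)ᵀ * V₂ τ)
      (-((V₁ t)ᵀ * (R t)ᵀ * V₂ t + (U₁ t)ᵀ * Q t * U₂ t)) t := by
  refine (hasDerivAt_matrix_mul (hasDerivAt_matrix_transpose (h₁.state t))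
    (h₂.costate t)).congr_deriv ?_
  simp only [transpose_sub, transpose_mul, Matrix.sub_mul, Matrix.mul_sub, Matrix.mul_neg,
    Matrix.mul_assoc]
  abel

lemma wronskian_eq {κ₁ κ₂ : Type*} [Fintype κ₁] [Fintype κ₂]
    {U₁ V₁ : ℝ → Matrix ι κ₁ ℝ} {U₂ V₂ : ℝ → Matrix ι κ₂ ℝ}
    (h₁ : IsHamiltonianSolution A R Q U₁ V₁) (h₂ : IsHamiltonianSolution A R Q U₂ V₂)
    (hR : ∀ t, (R t)ᵀ = R t) (hQ : ∀ t, (Q t)ᵀ = Q t) (s t : ℝ) :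
    (U₁ t)ᵀ * V₂ t - (V₁ t)ᵀ * U₂ t = (U₁ s)ᵀ * V₂ s - (V₁ s)ᵀ * U₂ s := by
  have hderiv (τ : ℝ) : HasDerivAt (fun τ => (U₁ τ)ᵀ * V₂ τ - (V₁ τ)ᵀ * U₂ τ) 0 τ := by
    have hswap := hasDerivAt_matrix_transpose (h₂.hasDerivAt_state_transpose_mul_costate h₁ τ)
    simp only [transpose_mul, transpose_transpose] at hswap
    refine ((h₁.hasDerivAt_state_transpose_mul_costate h₂ τ).sub hswap).congr_deriv ?_
    simp only [transpose_neg, transpose_add, transpose_mul, transpose_transpose, hR, hQ,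
      Matrix.mul_assoc, sub_self]
  ext i j
  exact is_const_of_deriv_eq_zero (fun τ => (hasDerivAt_matrix.1 (hderiv τ) i j).differentiableAt)
    (fun τ => (hasDerivAt_matrix.1 (hderiv τ) i j).deriv) t s

lemma hasDerivAt_energy {U V : ℝ → Matrix ι κ ℝ} (h : IsHamiltonianSolution A R Q U V)
    (x : κ → ℝ) (t : ℝ) :
    HasDerivAt (fun τ => (U τ *ᵥ x) ⬝ᵥ (V τ *ᵥ x))
      (-((V t *ᵥ x) ⬝ᵥ (R t *ᵥ (V t *ᵥ x)) + (U t *ᵥ x) ⬝ᵥ (Q t *ᵥ (U t *ᵥ x)))) t := by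
  refine (hasDerivAt_dotProduct (hasDerivAt_mulVec_const (h.state t) x)
    (hasDerivAt_mulVec_const (h.costate t) x)).congr_deriv ?_
  simp only [sub_mulVec, neg_mulVec, sub_dotProduct, dotProduct_sub, dotProduct_neg,
    ← mulVec_mulVec, dotProduct_mulVec _ (A t)ᵀ, vecMul_transpose]
  rw [dotProduct_comm (R t *ᵥ V t *ᵥ x)]
  ring

lemma coeff_mulVec_mulVec_eq_zero {U V : ℝ → Matrix ι κ ℝ} (h : IsHamiltonianSolution A R Q U V)
    (hR : ∀ t, (R t).PosSemidef) (hQ : ∀ t, (Q t).PosSemidef) {a b : ℝ} {x : κ → ℝ}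
    (ha : U a *ᵥ x = 0) (hb : U b *ᵥ x = 0) {t : ℝ} (ht : t ∈ Set.Ioo a b) :
    R t *ᵥ (V t *ᵥ x) = 0 ∧ Q t *ᵥ (U t *ᵥ x) = 0 := by
  have hR_nonneg (τ : ℝ) : 0 ≤ (V τ *ᵥ x) ⬝ᵥ (R τ *ᵥ (V τ *ᵥ x)) :=
    (hR τ).dotProduct_mulVec_nonneg _
  have hQ_nonneg (τ : ℝ) : 0 ≤ (U τ *ᵥ x) ⬝ᵥ (Q τ *ᵥ (U τ *ᵥ x)) :=
    (hQ τ).dotProduct_mulVec_nonneg _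
  have hanti : Antitone fun τ => (U τ *ᵥ x) ⬝ᵥ (V τ *ᵥ x) :=
    antitone_of_hasDerivAt_nonpos (h.hasDerivAt_energy x) fun τ =>
      neg_nonpos.2 (add_nonneg (hR_nonneg τ) (hQ_nonneg τ))
  have hzero : ∀ τ ∈ Set.Ioo a b, (U τ *ᵥ x) ⬝ᵥ (V τ *ᵥ x) = 0 := fun τ hτ =>
    le_antisymm (by simpa only [ha, zero_dotProduct] using hanti hτ.1.le)
      (by simpa only [hb, zero_dotProduct] using hanti hτ.2.le)
  have hderiv := (h.hasDerivAt_energy x t).unique <|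
    (hasDerivAt_const t (0 : ℝ)).congr_of_eventuallyEq
      (Filter.eventually_of_mem (isOpen_Ioo.mem_nhds ht) hzero)
  obtain ⟨hRV, hQU⟩ := (add_eq_zero_iff_of_nonneg (hR_nonneg t) (hQ_nonneg t)).1
    (neg_eq_zero.1 hderiv)
  exact ⟨((hR t).dotProduct_mulVec_zero_iff _).1 hRV, ((hQ t).dotProduct_mulVec_zero_iff _).1 hQU⟩

lemma costate_mulVec_eq_zero {U V : ℝ → Matrix ι κ ℝ} (h : IsHamiltonianSolution A R Q U V)
    (hR : ∀ t, (R t).PosSemidef) (hQ : ∀ t, (Q t).PosSemidef) (hN : IsIdenticallyNormal A R)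
    {a b : ℝ} (hab : a < b) {x : κ → ℝ} (ha : U a *ᵥ x = 0) (hb : U b *ᵥ x = 0) :
    ∀ t ∈ Set.Icc a b, V t *ᵥ x = 0 := by
  have hcostate (t : ℝ) : HasDerivAt (fun τ => V τ *ᵥ x)
      (-(Q t *ᵥ (U t *ᵥ x)) - (V t *ᵥ x) ᵥ* A t) t := by
    simpa only [sub_mulVec, neg_mulVec, ← mulVec_mulVec, mulVec_transpose] using
      hasDerivAt_mulVec_const (h.costate t) x
  have hopen : ∀ t ∈ Set.Ioo a b, V t *ᵥ x = 0 := by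
    refine hN a b (fun t => V t *ᵥ x) (fun t ht => ?_) fun t ht =>
      (h.coeff_mulVec_mulVec_eq_zero hR hQ ha hb ht).1
    simpa only [(h.coeff_mulVec_mulVec_eq_zero hR hQ ha hb ht).2, neg_zero, zero_sub] using
      hcostate t
  have hcont : Continuous fun t => V t *ᵥ x :=
    continuous_iff_continuousAt.2 fun t => (hcostate t).continuousAt
  exact Set.EqOn.of_subset_closure hopen hcont.continuousOn continuousOn_const
    Set.Ioo_subset_Icc_self (closure_Ioo hab.ne).ge

lemma costate_eq_mul_state {U V : ℝ → Matrix ι ι ℝ}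
    (h : IsHamiltonianSolution A R Q U V) (hA : Continuous A) (hR : Continuous R)
    {P : ℝ → Matrix ι ι ℝ} {I : Set ℝ} (hI : I.OrdConnected)
    (hP : ∀ t ∈ I, HasDerivAt P (riccatiField (A t) (R t) (Q t) (P t)) t) {s t : ℝ}
    (hs : s ∈ I) (ht : t ∈ I) (hPs : V s = P s * U s) : V t = P t * U t := by
  classical
  have hdefect (τ : ℝ) (hτ : τ ∈ I) : HasDerivAt (fun τ => V τ - P τ * U τ)
      ((-(A τ)ᵀ + P τ * R τ) * (V τ - P τ * U τ)) τ := by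
    refine ((h.costate τ).sub (hasDerivAt_matrix_mul (hP τ hτ) (h.state τ))).congr_deriv ?_
    simp only [riccatiField, Matrix.sub_mul, Matrix.mul_sub, Matrix.add_mul, Matrix.neg_mul,
      Matrix.mul_assoc]
    abel
  have hcoeff : ContinuousOn (fun τ => -(A τ)ᵀ + P τ * R τ) I :=
    hA.matrix_transpose.neg.continuousOn.add
      (ContinuousOn.mul (fun τ hτ => (hP τ hτ).continuousAt.continuousWithinAt) hR.continuousOn)
  let _ : NormedRing (Matrix ι ι ℝ) := Matrix.linftyOpNormedRing
  let _ : NormedAlgebra ℝ (Matrix ι ι ℝ) := Matrix.linftyOpNormedAlgebra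
  exact sub_eq_zero.1 (eq_zero_of_hasDerivAt_mul hI hcoeff hdefect hs ht (sub_eq_zero.2 hPs))

variable [DecidableEq ι] {U V : ℝ → Matrix ι ι ℝ}

lemma isUnit_state_of_ne (h : IsHamiltonianSolution A R Q U V) (hR : ∀ t, (R t).PosSemidef)
    (hQ : ∀ t, (Q t).PosSemidef) (hN : IsIdenticallyNormal A R) {s t : ℝ} (hts : t ≠ s)
    (hU : U s = 0) (hV : V s = 1) : IsUnit (U t) := by
  refine isUnit_iff_forall_mulVec_eq_zero.2 fun x hx => ?_
  have hs : U s *ᵥ x = 0 := by rw [hU, zero_mulVec]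
  have hVx : V s *ᵥ x = 0 := hts.lt_or_gt.elim
    (fun hlt => h.costate_mulVec_eq_zero hR hQ hN hlt hx hs s (Set.right_mem_Icc.2 hlt.le))
    (fun hgt => h.costate_mulVec_eq_zero hR hQ hN hgt hs hx s (Set.left_mem_Icc.2 hgt.le))
  rwa [hV, one_mulVec] at hVx

lemma hasDerivAt_costate_mul_inv (h : IsHamiltonianSolution A R Q U V) {t : ℝ}
    (hU : IsUnit (U t)) :
    HasDerivAt (fun τ => V τ * (U τ)⁻¹) (riccatiField (A t) (R t) (Q t) (V t * (U t)⁻¹)) t := by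
  have hdet := (isUnit_iff_isUnit_det _).1 hU
  refine (hasDerivAt_matrix_mul (h.costate t) (hasDerivAt_matrix_inv (h.state t) hU)).congr_deriv ?_
  simp only [riccatiField, Matrix.sub_mul, Matrix.mul_sub, Matrix.neg_mul, Matrix.mul_neg,
    Matrix.mul_assoc, mul_nonsing_inv _ hdet, Matrix.mul_one]
  abel

end IsHamiltonianSolution

/-- Two conjoined (isotropic) solutions `(U, V)` and `(Y, Z)` of the Hamiltonian system whose
Wronskian `UᵀZ - VᵀY` is the identity: together they form a symplectic fundamental matrix. -/
structure IsNormalizedConjoinedPair [DecidableEq ι] (A R Q U V Y Z : ℝ → Matrix ι ι ℝ) : Prop where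
  left : IsHamiltonianSolution A R Q U V
  right : IsHamiltonianSolution A R Q Y Z
  conjoined_left : ∀ t, (U t)ᵀ * V t = (V t)ᵀ * U t
  conjoined_right : ∀ t, (Y t)ᵀ * Z t = (Z t)ᵀ * Y t
  normalized : ∀ t, (U t)ᵀ * Z t - (V t)ᵀ * Y t = 1

namespace IsNormalizedConjoinedPair

variable [DecidableEq ι] {U V Y Z : ℝ → Matrix ι ι ℝ}

lemma of_initial (hR : ∀ t, (R t)ᵀ = R t) (hQ : ∀ t, (Q t)ᵀ = Q t)
    (h₁ : IsHamiltonianSolution A R Q U V) (h₂ : IsHamiltonianSolution A R Q Y Z) {s : ℝ}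
    (hU : U s = 1) (hV : (V s)ᵀ = V s) (hY : Y s = 0) (hZ : Z s = 1) :
    IsNormalizedConjoinedPair A R Q U V Y Z where
  left := h₁
  right := h₂
  conjoined_left t := sub_eq_zero.1 <| by
    simp only [h₁.wronskian_eq h₁ hR hQ s t, hU, hV, transpose_one, Matrix.one_mul,
      Matrix.mul_one, sub_self]
  conjoined_right t := sub_eq_zero.1 <| by
    simp only [h₂.wronskian_eq h₂ hR hQ s t, hY, transpose_zero, Matrix.zero_mul,
      Matrix.mul_zero, sub_self]
  normalized t := by
    simp only [h₁.wronskian_eq h₂ hR hQ s t, hU, hY, hZ, transpose_one, Matrix.one_mul,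
      Matrix.mul_zero, sub_zero]

lemma swap (h : IsNormalizedConjoinedPair A R Q U V Y Z) :
    IsNormalizedConjoinedPair A R Q Y Z (fun t => -U t) (fun t => -V t) where
  left := h.right
  right := h.left.neg
  conjoined_left := h.conjoined_right
  conjoined_right t := by
    simpa only [transpose_neg, Matrix.neg_mul, Matrix.mul_neg, neg_neg] using h.conjoined_left t
  normalized t := by
    have hnorm := congrArg transpose (h.normalized t)
    simp only [transpose_sub, transpose_mul, transpose_transpose, transpose_one] at hnorm
    simp only [Matrix.mul_neg, sub_neg_eq_add, neg_add_eq_sub, hnorm]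

lemma hasDerivAt_inv_left_mul_right (h : IsNormalizedConjoinedPair A R Q U V Y Z) {t : ℝ}
    (hU : IsUnit (U t)) :
    HasDerivAt (fun τ => (U τ)⁻¹ * Y τ) (-((U t)⁻¹ * R t * (U t)⁻¹ᵀ)) t := by
  have hdet := (isUnit_iff_isUnit_det _).1 hU
  have hinv : (U t)⁻¹ᵀ = Z t - V t * (U t)⁻¹ * Y t := by
    rw [transpose_nonsing_inv]
    refine inv_eq_right_inv ?_
    rw [Matrix.mul_sub, Matrix.mul_assoc, ← Matrix.mul_assoc, h.conjoined_left,
      Matrix.mul_assoc, mul_nonsing_inv_cancel_left _ _ hdet, h.normalized]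
  refine (hasDerivAt_matrix_mul (hasDerivAt_matrix_inv (h.left.state t) hU)
    (h.right.state t)).congr_deriv ?_
  simp only [hinv, Matrix.sub_mul, Matrix.mul_sub, Matrix.neg_mul, Matrix.mul_assoc,
    mul_nonsing_inv_cancel_left _ _ hdet]
  abel

lemma posSemidef_inv_left_mul_right_sub (h : IsNormalizedConjoinedPair A R Q U V Y Z)
    (hR : ∀ t, (R t).PosSemidef) {a b : ℝ} (hab : a ≤ b)
    (hU : ∀ t ∈ Set.Icc a b, IsUnit (U t)) :
    ((U a)⁻¹ * Y a - (U b)⁻¹ * Y b).PosSemidef := by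
  have hmono := posSemidef_sub_of_hasDerivAt hab
    (fun t ht => ((h.hasDerivAt_inv_left_mul_right (hU t ht)).neg).congr_deriv (neg_neg _))
    (fun t _ => (hR t).mul_mul_conjTranspose_same (U t)⁻¹)
  simpa only [Pi.neg_apply, neg_sub_neg] using hmono

lemma posSemidef_inv_right_mul_left_sub (h : IsNormalizedConjoinedPair A R Q U V Y Z)
    (hR : ∀ t, (R t).PosSemidef) {a b : ℝ} (hab : a ≤ b)
    (hY : ∀ t ∈ Set.Icc a b, IsUnit (Y t)) :
    ((Y b)⁻¹ * U b - (Y a)⁻¹ * U a).PosSemidef := by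
  simpa only [Matrix.mul_neg, neg_sub_neg] using h.swap.posSemidef_inv_left_mul_right_sub hR hab hY

lemma isUnit_left_of_posDef_of_le (h : IsNormalizedConjoinedPair A R Q U V Y Z)
    (hR : ∀ t, (R t).PosSemidef) {a b : ℝ} (hab : a ≤ b)
    (hY : ∀ t ∈ Set.Icc a b, IsUnit (Y t)) (ha : ((Y a)⁻¹ * U a).PosDef) : IsUnit (U b) := by
  have hunit := (ha.add_posSemidef (h.posSemidef_inv_right_mul_left_sub hR hab hY)).isUnit
  rw [add_sub_cancel] at hunit
  exact ((isUnit_nonsing_inv_iff.2 (hY b (Set.right_mem_Icc.2 hab))).mul_left_iff).1 hunit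

lemma isUnit_left_of_posDef_neg_of_le (h : IsNormalizedConjoinedPair A R Q U V Y Z)
    (hR : ∀ t, (R t).PosSemidef) {a b : ℝ} (hab : a ≤ b)
    (hY : ∀ t ∈ Set.Icc a b, IsUnit (Y t)) (hb : (-((Y b)⁻¹ * U b)).PosDef) : IsUnit (U a) := by
  have hunit := (hb.add_posSemidef (h.posSemidef_inv_right_mul_left_sub hR hab hY)).isUnit
  rw [neg_add_eq_sub, sub_sub_cancel_left, IsUnit.neg_iff] at hunit
  exact ((isUnit_nonsing_inv_iff.2 (hY a (Set.left_mem_Icc.2 hab))).mul_left_iff).1 hunit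

lemma posDef_inv_right_mul_left (h : IsNormalizedConjoinedPair A R Q U V Y Z)
    (hR : ∀ t, (R t).PosSemidef) {s t : ℝ} (hts : t ≤ s) (hYs : Y s = 0) (hYt : IsUnit (Y t))
    (hU : ∀ τ ∈ Set.Icc t s, IsUnit (U τ)) : ((Y t)⁻¹ * U t).PosDef := by
  have hpsd := h.posSemidef_inv_left_mul_right_sub hR hts hU
  have hUt := hU t (Set.left_mem_Icc.2 hts)
  rw [hYs, Matrix.mul_zero, sub_zero] at hpsd
  have hpd := (hpsd.posDef_iff_isUnit.2 ((isUnit_nonsing_inv_iff.2 hUt).mul hYt)).inv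
  rwa [Matrix.mul_inv_rev, nonsing_inv_nonsing_inv _ ((isUnit_iff_isUnit_det _).1 hUt)] at hpd

lemma posDef_neg_inv_right_mul_left (h : IsNormalizedConjoinedPair A R Q U V Y Z)
    (hR : ∀ t, (R t).PosSemidef) {s t : ℝ} (hst : s ≤ t) (hYs : Y s = 0) (hYt : IsUnit (Y t))
    (hU : ∀ τ ∈ Set.Icc s t, IsUnit (U τ)) : (-((Y t)⁻¹ * U t)).PosDef := by
  have hpsd := h.posSemidef_inv_left_mul_right_sub hR hst hU
  have hUt := hU t (Set.right_mem_Icc.2 hst)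
  rw [hYs, Matrix.mul_zero, zero_sub, ← Matrix.mul_neg] at hpsd
  have hpd := (hpsd.posDef_iff_isUnit.2 ((isUnit_nonsing_inv_iff.2 hUt).mul hYt.neg)).inv
  rw [Matrix.mul_inv_rev, nonsing_inv_nonsing_inv _ ((isUnit_iff_isUnit_det _).1 hUt)] at hpd
  have hinv_neg : (-Y t)⁻¹ = -(Y t)⁻¹ :=
    inv_eq_right_inv (by rw [neg_mul_neg, mul_nonsing_inv _ ((isUnit_iff_isUnit_det _).1 hYt)])
  rwa [hinv_neg, Matrix.neg_mul] at hpd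

lemma isUnit_left_of_riccati (h : IsNormalizedConjoinedPair A R Q U V Y Z) (hA : Continuous A)
    (hR : Continuous R) {P : ℝ → Matrix ι ι ℝ} {I : Set ℝ} (hI : I.OrdConnected)
    (hP : ∀ t ∈ I, HasDerivAt P (riccatiField (A t) (R t) (Q t) (P t)) t) {s t : ℝ}
    (hs : s ∈ I) (ht : t ∈ I) (hPs : V s = P s * U s) : IsUnit (U t) := by
  have hV := h.left.costate_eq_mul_state hA hR hI hP hs ht hPs
  have hnorm := h.normalized t
  rw [hV, transpose_mul, Matrix.mul_assoc, ← Matrix.mul_sub] at hnorm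
  exact (isUnit_transpose _).1 (IsUnit.of_mul_eq_one _ hnorm)

lemma isUnit_left_of_sInf_lt_of_lt_sSup (h : IsNormalizedConjoinedPair A R Q U V Y Z)
    (hR : ∀ t, (R t).PosSemidef) {s : ℝ} (hUs : IsUnit (U s)) (hY : ∀ t, t ≠ s → IsUnit (Y t))
    {t : ℝ}
    (hinf : sInf ((fun x : ℝ => (x : EReal)) '' {τ | τ < s ∧ ((Y τ)⁻¹ * U τ).PosDef}) < t)
    (hsup : t < sSup ((fun x : ℝ => (x : EReal)) '' {τ | s < τ ∧ (-((Y τ)⁻¹ * U τ)).PosDef})) :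
    IsUnit (U t) := by
  rcases lt_trichotomy t s with hts | rfl | hst
  · obtain ⟨_, ⟨a, ⟨_, ha⟩, rfl⟩, hat⟩ := sInf_lt_iff.1 hinf
    exact h.isUnit_left_of_posDef_of_le hR (EReal.coe_lt_coe_iff.1 hat).le
      (fun τ hτ => hY τ (hτ.2.trans_lt hts).ne) ha
  · exact hUs
  · obtain ⟨_, ⟨b, ⟨_, hb⟩, rfl⟩, htb⟩ := lt_sSup_iff.1 hsup
    exact h.isUnit_left_of_posDef_neg_of_le hR (EReal.coe_lt_coe_iff.1 htb).le
      (fun τ hτ => hY τ (hst.trans_le hτ.1).ne') hb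

lemma sInf_le_and_le_sSup_of_isUnit_left (h : IsNormalizedConjoinedPair A R Q U V Y Z)
    (hR : ∀ t, (R t).PosSemidef) {s : ℝ} (hYs : Y s = 0) (hY : ∀ t, t ≠ s → IsUnit (Y t))
    {a b : EReal} (ha : a < s) (hb : s < b) (hU : ∀ t : ℝ, a < t → t < b → IsUnit (U t)) :
    sInf ((fun x : ℝ => (x : EReal)) '' {τ | τ < s ∧ ((Y τ)⁻¹ * U τ).PosDef}) ≤ a ∧
      b ≤ sSup ((fun x : ℝ => (x : EReal)) '' {τ | s < τ ∧ (-((Y τ)⁻¹ * U τ)).PosDef}) := by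
  refine ⟨sInf_coe_image_le_of_forall_mem ha fun t hat hts => ⟨hts, ?_⟩,
    le_sSup_coe_image_of_forall_mem hb fun t hst htb => ⟨hst, ?_⟩⟩
  · exact h.posDef_inv_right_mul_left hR hts.le hYs (hY t hts.ne) fun τ hτ =>
      hU τ (hat.trans_le (EReal.coe_le_coe hτ.1)) ((EReal.coe_le_coe hτ.2).trans_lt hb)
  · exact h.posDef_neg_inv_right_mul_left hR hst.le hYs (hY t hst.ne') fun τ hτ =>
      hU τ (ha.trans_le (EReal.coe_le_coe hτ.1)) ((EReal.coe_le_coe hτ.2).trans_lt htb)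

lemma sInf_le_and_le_sSup_of_riccati (h : IsNormalizedConjoinedPair A R Q U V Y Z)
    (hA : Continuous A) (hR : Continuous R) (hRpsd : ∀ t, (R t).PosSemidef)
    {P : ℝ → Matrix ι ι ℝ} {s : ℝ} (hPs : V s = P s * U s) (hYs : Y s = 0)
    (hY : ∀ t, t ≠ s → IsUnit (Y t)) {a b : EReal} (ha : a < s) (hb : s < b)
    (hP : ∀ t : ℝ, a < t → t < b →
      HasDerivAt P (riccatiField (A t) (R t) (Q t) (P t)) t) :
    sInf ((fun x : ℝ => (x : EReal)) '' {τ | τ < s ∧ ((Y τ)⁻¹ * U τ).PosDef}) ≤ a ∧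
      b ≤ sSup ((fun x : ℝ => (x : EReal)) '' {τ | s < τ ∧ (-((Y τ)⁻¹ * U τ)).PosDef}) := by
  have hI : {t : ℝ | a < t ∧ t < b}.OrdConnected :=
    Set.ordConnected_Ioo.preimage_mono EReal.coe_strictMono.monotone
  exact h.sInf_le_and_le_sSup_of_isUnit_left hRpsd hYs hY ha hb fun t hat htb =>
    h.isUnit_left_of_riccati hA hR hI (fun τ hτ => hP τ hτ.1 hτ.2) ⟨ha, hb⟩ ⟨hat, htb⟩ hPs

end IsNormalizedConjoinedPair

section TransitionMatrix

variable [DecidableEq ι] {Φ : ℝ → ℝ → Matrix (ι ⊕ ι) (ι ⊕ ι) ℝ}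

namespace IsSTM

lemma toBlocks_self {F : ℝ → Matrix (ι ⊕ ι) (ι ⊕ ι) ℝ} (hΦ : IsSTM F Φ) (s : ℝ) :
    (Φ s s).toBlocks₁₁ = 1 ∧ (Φ s s).toBlocks₁₂ = 0 ∧ (Φ s s).toBlocks₂₁ = 0 ∧
      (Φ s s).toBlocks₂₂ = 1 := by
  rw [hΦ.1, ← fromBlocks_one]
  exact ⟨rfl, rfl, rfl, rfl⟩

lemma isHamiltonianSolution
    (hΦ : IsSTM (fun t => fromBlocks (A t) (-R t) (-Q t) (-(A t)ᵀ)) Φ) (s : ℝ) :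
    IsHamiltonianSolution A R Q (fun t => (Φ t s).toBlocks₁₁) (fun t => (Φ t s).toBlocks₂₁) ∧
      IsHamiltonianSolution A R Q (fun t => (Φ t s).toBlocks₁₂) (fun t => (Φ t s).toBlocks₂₂) := by
  have hderiv (t : ℝ) := hΦ.2 s t
  have hblocks (t : ℝ) : fromBlocks (A t) (-R t) (-Q t) (-(A t)ᵀ) * Φ t s = _ :=
    (congrArg _ (fromBlocks_toBlocks (Φ t s)).symm).trans (fromBlocks_multiply ..)
  simp only [hblocks, Matrix.neg_mul, ← sub_eq_add_neg] at hderiv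
  exact ⟨⟨fun t => hasDerivAt_matrix.2 fun i j => hderiv t (.inl i) (.inl j),
      fun t => hasDerivAt_matrix.2 fun i j => hderiv t (.inr i) (.inl j)⟩,
    ⟨fun t => hasDerivAt_matrix.2 fun i j => hderiv t (.inl i) (.inr j),
      fun t => hasDerivAt_matrix.2 fun i j => hderiv t (.inr i) (.inr j)⟩⟩

lemma isNormalizedConjoinedPair
    (hΦ : IsSTM (fun t => fromBlocks (A t) (-R t) (-Q t) (-(A t)ᵀ)) Φ)
    (hR : ∀ t, (R t)ᵀ = R t) (hQ : ∀ t, (Q t)ᵀ = Q t) (s : ℝ) {P : Matrix ι ι ℝ} (hP : Pᵀ = P) :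
    IsNormalizedConjoinedPair A R Q
      (fun t => (Φ t s).toBlocks₁₁ + (Φ t s).toBlocks₁₂ * P)
      (fun t => (Φ t s).toBlocks₂₁ + (Φ t s).toBlocks₂₂ * P)
      (fun t => (Φ t s).toBlocks₁₂) (fun t => (Φ t s).toBlocks₂₂) := by
  obtain ⟨hleft, hright⟩ := hΦ.isHamiltonianSolution s
  obtain ⟨h₁₁, h₁₂, h₂₁, h₂₂⟩ := hΦ.toBlocks_self s
  refine .of_initial hR hQ (hleft.add (hright.mul_const P)) hright (s := s) ?_ ?_ h₁₂ h₂₂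
  · simp only [h₁₁, h₁₂, Matrix.zero_mul, add_zero]
  · simp only [h₂₁, h₂₂, Matrix.one_mul, zero_add, hP]

end IsSTM

end TransitionMatrix

end Hamiltonian

namespace IsCtrbMatSeq

variable {n p : ℕ} {A : ℝ → Matrix (Fin n) (Fin n) ℝ} {B : ℝ → Matrix (Fin n) (Fin p) ℝ}
  {Γ : ℕ → ℝ → Matrix (Fin n) (Fin p) ℝ}

lemma hasDerivAt_vecMul_succ (hΓ : IsCtrbMatSeq A B Γ) {v : ℝ → Fin n → ℝ} {t : ℝ}
    (hv : HasDerivAt v (-(v t ᵥ* A t)) t) {k : ℕ} (hk : k < n) :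
    HasDerivAt (fun τ => v τ ᵥ* Γ k τ) (v t ᵥ* Γ (k + 1) t) t := by
  refine (hasDerivAt_vecMul hv (hasDerivAt_matrix.2 (hΓ.2 k hk t))).congr_deriv ?_
  rw [neg_vecMul, vecMul_vecMul, vecMul_add]
  abel

lemma vecMul_eq_zero (hΓ : IsCtrbMatSeq A B Γ) {v : ℝ → Fin n → ℝ} {a b : ℝ}
    (hv : ∀ t ∈ Set.Ioo a b, HasDerivAt v (-(v t ᵥ* A t)) t)
    (hB : ∀ t ∈ Set.Ioo a b, v t ᵥ* B t = 0) {k : ℕ} (hk : k ≤ n) :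
    ∀ t ∈ Set.Ioo a b, v t ᵥ* Γ k t = 0 := by
  induction k with
  | zero => rwa [hΓ.1]
  | succ k ih =>
    intro t ht
    exact (hΓ.hasDerivAt_vecMul_succ (hv t ht) hk).unique <|
      (hasDerivAt_const t 0).congr_of_eventuallyEq
        (Filter.eventually_of_mem (isOpen_Ioo.mem_nhds ht) (ih (Nat.le_of_succ_le hk)))

lemma isIdenticallyNormal (hΓ : IsCtrbMatSeq A B Γ)
    (hrank : ∀ t₀ t₁ : ℝ, t₀ < t₁ → ∃ t ∈ Set.Ioo t₀ t₁, (ctrbMat Γ t).rank = n) :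
    IsIdenticallyNormal A fun t => B t * (B t)ᵀ := by
  intro a b v hv hR t ht
  have hB : ∀ τ ∈ Set.Ioo a b, v τ ᵥ* B τ = 0 := fun τ hτ => by
    rw [← mulVec_transpose, ← conjTranspose_eq_transpose_of_trivial]
    exact (self_mul_conjTranspose_mulVec_eq_zero _ _).1 (hR τ hτ)
  by_contra hne
  have hnear : ∀ᶠ τ in nhds t, v τ ≠ 0 ∧ τ ∈ Set.Ioo a b :=
    ((hv t ht).continuousAt.eventually_ne hne).and (isOpen_Ioo.mem_nhds ht)
  obtain ⟨l, u, ⟨hlt, htu⟩, hsub⟩ := mem_nhds_iff_exists_Ioo_subset.1 hnear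
  obtain ⟨τ, hτ, hfull⟩ := hrank l u (hlt.trans htu)
  obtain ⟨hvτ, hτab⟩ := hsub hτ
  have hkernel : v τ ᵥ* ctrbMat Γ τ = 0 := funext fun kj =>
    congrFun (hΓ.vecMul_eq_zero hv hB kj.1.is_le' τ hτab) kj.2
  refine hvτ (vecMul_injective_of_rank_eq_card (hfull.trans (Fintype.card_fin n).symm) ?_)
  simpa only [zero_vecMul] using hkernel

end IsCtrbMatSeq

lemma isRiccatiSolAt_iff_hasDerivAt {n p : ℕ} {A Q : ℝ → Matrix (Fin n) (Fin n) ℝ}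
    {B : ℝ → Matrix (Fin n) (Fin p) ℝ} {P : ℝ → Matrix (Fin n) (Fin n) ℝ} {t : ℝ} :
    IsRiccatiSolAt A Q B P t ↔
      HasDerivAt P (riccatiField (A t) (B t * (B t)ᵀ) (Q t) (P t)) t :=
  hasDerivAt_matrix.symm

lemma sub_neg_inv_mul {K ι : Type*} [Field K] [Fintype ι] [DecidableEq ι] {Y : Matrix ι ι K}
    (hY : IsUnit Y) (X P : Matrix ι ι K) : P - -(Y⁻¹ * X) = Y⁻¹ * (X + Y * P) := by
  rw [Matrix.mul_add, nonsing_inv_mul_cancel_left _ _ ((isUnit_iff_isUnit_det _).1 hY),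
    sub_neg_eq_add, add_comm]

lemma neg_inv_mul_sub {K ι : Type*} [Field K] [Fintype ι] [DecidableEq ι] {Y : Matrix ι ι K}
    (hY : IsUnit Y) (X P : Matrix ι ι K) : -(Y⁻¹ * X) - P = -(Y⁻¹ * (X + Y * P)) := by
  rw [← sub_neg_inv_mul hY, neg_sub]

theorem stmt_7_general {ι : Type*} [Fintype ι] [DecidableEq ι] (A R Q : ℝ → Matrix ι ι ℝ)
    (hA : Continuous A) (hR : Continuous R) (hRpsd : ∀ t, (R t).PosSemidef)
    (hQpsd : ∀ t, (Q t).PosSemidef) (hN : IsIdenticallyNormal A R)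
    (Φ : ℝ → ℝ → Matrix (ι ⊕ ι) (ι ⊕ ι) ℝ)
    (hΦ : IsSTM (fun t => fromBlocks (A t) (-R t) (-Q t) (-(A t)ᵀ)) Φ)
    (s : ℝ) (Ps : Matrix ι ι ℝ) (hPs : Psᵀ = Ps) (t₀ t₁ : EReal)
    (ht₀ : t₀ = sInf ((fun x : ℝ => (x : EReal)) ''
      {t : ℝ | t < s ∧ (Ps - -(((Φ t s).toBlocks₁₂)⁻¹ * (Φ t s).toBlocks₁₁)).PosDef}))
    (ht₁ : t₁ = sSup ((fun x : ℝ => (x : EReal)) ''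
      {t : ℝ | s < t ∧ (-(((Φ t s).toBlocks₁₂)⁻¹ * (Φ t s).toBlocks₁₁) - Ps).PosDef})) :
    (∃ P : ℝ → Matrix ι ι ℝ, P s = Ps ∧ ∀ t : ℝ, t₀ < (t : EReal) → (t : EReal) < t₁ →
      HasDerivAt P (riccatiField (A t) (R t) (Q t) (P t)) t) ∧
    (∀ (a b : EReal) (P : ℝ → Matrix ι ι ℝ), a < (s : EReal) → (s : EReal) < b → P s = Ps →
      (∀ t : ℝ, a < (t : EReal) → (t : EReal) < b →
        HasDerivAt P (riccatiField (A t) (R t) (Q t) (P t)) t) →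
      t₀ ≤ a ∧ b ≤ t₁) := by
  have hpair := hΦ.isNormalizedConjoinedPair (fun t => (hRpsd t).isHermitian)
    (fun t => (hQpsd t).isHermitian) s hPs
  obtain ⟨h₁₁, h₁₂, h₂₁, h₂₂⟩ := hΦ.toBlocks_self s
  set U := fun t => (Φ t s).toBlocks₁₁ + (Φ t s).toBlocks₁₂ * Ps
  set V := fun t => (Φ t s).toBlocks₂₁ + (Φ t s).toBlocks₂₂ * Ps
  have hUs : U s = 1 := by simp only [U, h₁₁, h₁₂, Matrix.zero_mul, add_zero]
  have hVs : V s = Ps := by simp only [V, h₂₁, h₂₂, Matrix.one_mul, zero_add]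
  have hY (t : ℝ) (ht : t ≠ s) : IsUnit (Φ t s).toBlocks₁₂ :=
    hpair.right.isUnit_state_of_ne hRpsd hQpsd hN ht h₁₂ h₂₂
  have hset₀ : {t | t < s ∧ (Ps - -((Φ t s).toBlocks₁₂⁻¹ * (Φ t s).toBlocks₁₁)).PosDef} =
      {t | t < s ∧ ((Φ t s).toBlocks₁₂⁻¹ * U t).PosDef} :=
    Set.ext fun t => and_congr_right fun hts => by rw [sub_neg_inv_mul (hY t hts.ne)]
  have hset₁ : {t | s < t ∧ (-((Φ t s).toBlocks₁₂⁻¹ * (Φ t s).toBlocks₁₁) - Ps).PosDef} =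
      {t | s < t ∧ (-((Φ t s).toBlocks₁₂⁻¹ * U t)).PosDef} :=
    Set.ext fun t => and_congr_right fun hst => by rw [neg_inv_mul_sub (hY t hst.ne')]
  rw [ht₀, ht₁, hset₀, hset₁]
  refine ⟨⟨fun t => V t * (U t)⁻¹, ?_, fun t hinf hsup =>
    hpair.left.hasDerivAt_costate_mul_inv <|
      hpair.isUnit_left_of_sInf_lt_of_lt_sSup hRpsd (hUs ▸ isUnit_one) hY hinf hsup⟩,
    fun a b P ha hb hP => hpair.sInf_le_and_le_sSup_of_riccati hA hR hRpsd ?_ h₁₂ hY ha hb⟩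
  · simp only [hUs, hVs, inv_one, Matrix.mul_one]
  · rw [hUs, hVs, hP, Matrix.mul_one]

theorem stmt_7 {n p : ℕ} (hn : 1 ≤ n) (hp : 1 ≤ p)
    (A Q : ℝ → Matrix (Fin n) (Fin n) ℝ) (B : ℝ → Matrix (Fin n) (Fin p) ℝ)
    (hA : Continuous A) (hB : Continuous B) (hQ : Continuous Q)
    (hQpsd : ∀ t, (Q t).PosSemidef)
    (hAsm : ∀ i j, ContDiff ℝ (n - 1 : ℕ) fun t => A t i j)
    (hBsm : ∀ i j, ContDiff ℝ (n : ℕ) fun t => B t i j)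
    (Γ : ℕ → ℝ → Matrix (Fin n) (Fin p) ℝ)
    (hΓ : IsCtrbMatSeq A B Γ)
    (hTC : ∀ t₀ t₁ : ℝ, t₀ < t₁ → ∃ t ∈ Set.Ioo t₀ t₁, (ctrbMat Γ t).rank = n)
    (Φ : ℝ → ℝ → Matrix (Fin n ⊕ Fin n) (Fin n ⊕ Fin n) ℝ)
    (hΦ : IsSTM (fun t => fromBlocks (A t) (-(B t * (B t)ᵀ)) (-(Q t)) (-(A t)ᵀ)) Φ)
    (s : ℝ) (Ps : Matrix (Fin n) (Fin n) ℝ) (hPs : Psᵀ = Ps)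
    (t₀ t₁ : EReal)
    (ht₀ : t₀ = sInf ((fun x : ℝ => (x : EReal)) ''
      {t : ℝ | t < s ∧ (Ps - -(((Φ t s).toBlocks₁₂)⁻¹ * (Φ t s).toBlocks₁₁)).PosDef}))
    (ht₁ : t₁ = sSup ((fun x : ℝ => (x : EReal)) ''
      {t : ℝ | s < t ∧ (-(((Φ t s).toBlocks₁₂)⁻¹ * (Φ t s).toBlocks₁₁) - Ps).PosDef})) :
    (∃ P : ℝ → Matrix (Fin n) (Fin n) ℝ, P s = Ps ∧
      ∀ t : ℝ, t₀ < (t : EReal) → (t : EReal) < t₁ → IsRiccatiSolAt A Q B P t) ∧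
    (∀ (a b : EReal) (P : ℝ → Matrix (Fin n) (Fin n) ℝ),
      a < (s : EReal) → (s : EReal) < b → P s = Ps →
      (∀ t : ℝ, a < (t : EReal) → (t : EReal) < b → IsRiccatiSolAt A Q B P t) →
      t₀ ≤ a ∧ b ≤ t₁) := by
  simp only [isRiccatiSolAt_iff_hasDerivAt]
  exact stmt_7_general A (fun t => B t * (B t)ᵀ) Q hA (hB.matrix_mul hB.matrix_transpose)
    (fun t => posSemidef_self_mul_conjTranspose (B t)) hQpsd (hΓ.isIdenticallyNormal hTC)
    Φ hΦ s Ps hPs t₀ t₁ ht₀ ht₁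
end

section
/- Suppose the Riccati equation Π'(t) = −A(t)ᵀΠ − ΠA(t) + ΠB(t)B(t)ᵀΠ − Q(t) has a symmetric solution Π on [0,1]. Then for all s, t ∈ [0,1], the state transition matrix of the closed-loop matrix A(t) − B(t)B(t)ᵀΠ(t) is given by Φ_{A−BBᵀΠ}(t,s) = Φ₁₁(t,s) + Φ₁₂(t,s)Π(s); that is, for each fixed s the map t ↦ Φ₁₁(t,s) + Φ₁₂(t,s)Π(s) solves X'(t) = (A(t) − B(t)B(t)ᵀΠ(t))X(t) with X(s) = Iₙ. -/
/-!
Let `(X, Y)` be the image of the columns of `(1, P s)` under the flow `Φ (·, s)` of the Hamiltonian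
system. If `P` solves the Riccati equation attached to the blocks `A, B, C, D` of the system, then
the graph of `P` is invariant under the flow: the defect `Y - P X` solves the *homogeneous* linear
equation `Z' = (D - P B) Z` and vanishes at `s`, hence vanishes identically by Grönwall's
inequality. Substituting `Y = P X` in `X' = A X + B Y` gives `X' = (A + B P) X`.
-/

open Matrix

section Gronwall

open Set

variable {E : Type*} [NormedAddCommGroup E] [NormedSpace ℝ E] {f f' : ℝ → E} {k : ℝ → ℝ}

theorem eq_zero_right_of_norm_deriv_le {a b : ℝ} (hab : a ≤ b) (hk : ContinuousOn k (Icc a b))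
    (hf : ∀ t ∈ Icc a b, HasDerivWithinAt f (f' t) (Icc a b) t)
    (hle : ∀ t ∈ Icc a b, ‖f' t‖ ≤ k t * ‖f t‖) (ha : f a = 0) : f b = 0 := by
  obtain ⟨K, hK⟩ := isCompact_Icc.bddAbove_image hk
  refine eq_zero_of_abs_deriv_le_mul_abs_self_of_eq_zero_right (f' := f') (K := K)
    (fun t ht ↦ (hf t ht).continuousWithinAt)
    (fun t ht ↦ ?_) ha (fun t ht ↦ ?_) b (right_mem_Icc.2 hab)
  · exact (hf t (Ico_subset_Icc_self ht)).mono_of_mem_nhdsWithin (Icc_mem_nhdsGE_of_mem ht)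
  · have ht' := Ico_subset_Icc_self ht
    grw [hle t ht', hK (mem_image_of_mem k ht')]

theorem eq_zero_left_of_norm_deriv_le {a b : ℝ} (hab : a ≤ b) (hk : ContinuousOn k (Icc a b))
    (hf : ∀ t ∈ Icc a b, HasDerivWithinAt f (f' t) (Icc a b) t)
    (hle : ∀ t ∈ Icc a b, ‖f' t‖ ≤ k t * ‖f t‖) (hb : f b = 0) : f a = 0 := by
  have hmaps : MapsTo Neg.neg (Icc (-b) (-a)) (Icc a b) := fun t ht ↦
    ⟨le_neg_of_le_neg ht.2, neg_le_of_neg_le ht.1⟩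
  have hreflect := eq_zero_right_of_norm_deriv_le (f := fun t ↦ f (-t)) (f' := fun t ↦ -f' (-t))
    (neg_le_neg hab) (hk.comp continuousOn_neg hmaps)
    (fun t ht ↦ by
      simpa [Function.comp_def] using
        (hf (-t) (hmaps ht)).scomp t (hasDerivAt_neg t).hasDerivWithinAt hmaps)
    (fun t ht ↦ by simpa using hle (-t) (hmaps ht)) (by simpa using hb)
  simpa using hreflect

theorem eqOn_zero_of_norm_deriv_le {S : Set ℝ} (hS : S.OrdConnected) (hk : ContinuousOn k S)
    (hf : ∀ t ∈ S, HasDerivWithinAt f (f' t) S t) (hle : ∀ t ∈ S, ‖f' t‖ ≤ k t * ‖f t‖)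
    {s : ℝ} (hs : s ∈ S) (hfs : f s = 0) : EqOn f 0 S := by
  intro t ht
  rcases le_total s t with hst | hts
  · have hsub := hS.out hs ht
    exact eq_zero_right_of_norm_deriv_le hst (hk.mono hsub)
      (fun x hx ↦ (hf x (hsub hx)).mono hsub) (fun x hx ↦ hle x (hsub hx)) hfs
  · have hsub := hS.out ht hs
    exact eq_zero_left_of_norm_deriv_le hts (hk.mono hsub)
      (fun x hx ↦ (hf x (hsub hx)).mono hsub) (fun x hx ↦ hle x (hsub hx)) hfs

end Gronwall

section Matrix

variable {𝕜 R l m n : Type*} [NontriviallyNormedField 𝕜] [NormedRing R] [NormedAlgebra 𝕜 R]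
  {S : Set 𝕜} {t : 𝕜}

theorem hasDerivWithinAt_matrix_iff [Finite n] {F : 𝕜 → Matrix m n R} {F' : Matrix m n R} :
    HasDerivWithinAt F F' S t ↔ ∀ i j, HasDerivWithinAt (fun τ ↦ F τ i j) (F' i j) S t := by
  cases nonempty_fintype n
  exact hasDerivWithinAt_pi.trans (forall_congr' fun _ ↦ hasDerivWithinAt_pi)

theorem hasDerivWithinAt_fromRows_iff [Finite n] {X : 𝕜 → Matrix l n R} {Y : 𝕜 → Matrix m n R}
    {X' : Matrix l n R} {Y' : Matrix m n R} :
    HasDerivWithinAt (fun τ ↦ fromRows (X τ) (Y τ)) (fromRows X' Y') S t ↔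
      HasDerivWithinAt X X' S t ∧ HasDerivWithinAt Y Y' S t := by
  simp only [hasDerivWithinAt_matrix_iff, Sum.forall, fromRows_apply_inl, fromRows_apply_inr]

theorem hasDerivWithinAt_matrix_mul [Fintype m] [Finite n] {F : 𝕜 → Matrix l m R}
    {G : 𝕜 → Matrix m n R} {F' : Matrix l m R} {G' : Matrix m n R}
    (hF : HasDerivWithinAt F F' S t) (hG : HasDerivWithinAt G G' S t) :
    HasDerivWithinAt (fun τ ↦ F τ * G τ) (F' * G t + F t * G') S t := by
  rw [hasDerivWithinAt_matrix_iff] at hF hG ⊢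
  intro i j
  simp only [Matrix.add_apply, Matrix.mul_apply, ← Finset.sum_add_distrib]
  exact HasDerivWithinAt.fun_sum fun q _ ↦ (hF i q).mul (hG q j)

end Matrix

section Riccati

variable {R l m n : Type*} [NormedRing R] [NormedAlgebra ℝ R] [Fintype l] [Fintype m] [Finite n]
  {S : Set ℝ} {P : ℝ → Matrix m l R} {X : ℝ → Matrix l n R} {Y : ℝ → Matrix m n R}

open scoped Matrix.Norms.Operator in
theorem hasDerivWithinAt_riccati_defect {A : Matrix l l R} {B : Matrix l m R} {C : Matrix m l R}
    {D : Matrix m m R} {t : ℝ}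
    (hP : HasDerivWithinAt P (D * P t - P t * A - P t * B * P t + C) S t)
    (hX : HasDerivWithinAt X (A * X t + B * Y t) S t)
    (hY : HasDerivWithinAt Y (C * X t + D * Y t) S t) :
    HasDerivWithinAt (fun τ ↦ Y τ - P τ * X τ) ((D - P t * B) * (Y t - P t * X t)) S t := by
  cases nonempty_fintype n
  refine (hY.sub (hasDerivWithinAt_matrix_mul hP hX)).congr_deriv ?_
  simp only [Matrix.mul_add, Matrix.add_mul, Matrix.mul_sub, Matrix.sub_mul, Matrix.mul_assoc]
  abel

variable {A : ℝ → Matrix l l R} {B : ℝ → Matrix l m R} {C : ℝ → Matrix m l R}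
  {D : ℝ → Matrix m m R} {s : ℝ}

open scoped Matrix.Norms.Operator in
theorem eqOn_mul_of_riccati (hS : S.OrdConnected) (hB : ContinuousOn B S) (hD : ContinuousOn D S)
    (hP : ∀ t ∈ S,
      HasDerivWithinAt P (D t * P t - P t * A t - P t * B t * P t + C t) S t)
    (hX : ∀ t ∈ S, HasDerivWithinAt X (A t * X t + B t * Y t) S t)
    (hY : ∀ t ∈ S, HasDerivWithinAt Y (C t * X t + D t * Y t) S t)
    (hs : s ∈ S) (hYs : Y s = P s * X s) : S.EqOn Y (fun t ↦ P t * X t) := by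
  cases nonempty_fintype n
  have hPcont : ContinuousOn P S := fun t ht ↦ (hP t ht).continuousWithinAt
  have hPB : ContinuousOn (fun t ↦ P t * B t) S :=
    (continuous_fst.matrix_mul continuous_snd).comp_continuousOn (hPcont.prodMk hB)
  have hdefect : S.EqOn (fun t ↦ Y t - P t * X t) 0 :=
    eqOn_zero_of_norm_deriv_le hS (hD.sub hPB).norm
      (fun t ht ↦ hasDerivWithinAt_riccati_defect (hP t ht) (hX t ht) (hY t ht))
      (fun t _ ↦ linfty_opNorm_mul _ _) hs (sub_eq_zero.2 hYs)
  exact fun t ht ↦ sub_eq_zero.1 (hdefect ht)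

theorem hasDerivWithinAt_closedLoop_of_riccati (hS : S.OrdConnected) (hB : ContinuousOn B S)
    (hD : ContinuousOn D S)
    (hP : ∀ t ∈ S,
      HasDerivWithinAt P (D t * P t - P t * A t - P t * B t * P t + C t) S t)
    (hX : ∀ t ∈ S, HasDerivWithinAt X (A t * X t + B t * Y t) S t)
    (hY : ∀ t ∈ S, HasDerivWithinAt Y (C t * X t + D t * Y t) S t)
    (hs : s ∈ S) (hYs : Y s = P s * X s) {t : ℝ} (ht : t ∈ S) :
    HasDerivWithinAt X ((A t + B t * P t) * X t) S t := by
  have hYt : Y t = P t * X t := eqOn_mul_of_riccati hS hB hD hP hX hY hs hYs ht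
  simpa only [hYt, Matrix.add_mul, Matrix.mul_assoc] using hX t ht

end Riccati

theorem mul_fromRows_one {R l m n o : Type*} [Semiring R] [Fintype l] [Fintype m]
    [DecidableEq l] (M : Matrix (n ⊕ o) (l ⊕ m) R) (V : Matrix m l R) :
    M * fromRows (1 : Matrix l l R) V =
      fromRows (M.toBlocks₁₁ + M.toBlocks₁₂ * V) (M.toBlocks₂₁ + M.toBlocks₂₂ * V) := by
  conv_lhs => rw [← fromBlocks_toBlocks M]
  simp only [fromBlocks_mul_fromRows, Matrix.mul_one]

open scoped Matrix.Norms.Operator in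
theorem IsSTM.hasDerivWithinAt_mul {l n : Type*} [Fintype l] [DecidableEq l] [Finite n]
    {F : ℝ → Matrix l l ℝ} {Φ : ℝ → ℝ → Matrix l l ℝ} (hΦ : IsSTM F Φ)
    (W : Matrix l n ℝ) (S : Set ℝ) (s t : ℝ) :
    HasDerivWithinAt (fun τ ↦ Φ τ s * W) (F t * (Φ t s * W)) S t := by
  cases nonempty_fintype n
  have hflow : HasDerivWithinAt (fun τ ↦ Φ τ s) (F t * Φ t s) S t :=
    hasDerivWithinAt_matrix_iff.2 fun i j ↦ (hΦ.2 s t i j).hasDerivWithinAt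
  simpa only [Matrix.mul_zero, add_zero, Matrix.mul_assoc] using
    hasDerivWithinAt_matrix_mul hflow (hasDerivWithinAt_const t S W)

theorem stmt_8_general {l m : Type*} [Fintype l] [DecidableEq l] [Fintype m] [DecidableEq m]
    {S : Set ℝ} (hS : S.OrdConnected)
    {A : ℝ → Matrix l l ℝ} {B : ℝ → Matrix l m ℝ} {C : ℝ → Matrix m l ℝ} {D : ℝ → Matrix m m ℝ}
    {Φ : ℝ → ℝ → Matrix (l ⊕ m) (l ⊕ m) ℝ}
    (hΦ : IsSTM (fun t ↦ fromBlocks (A t) (B t) (C t) (D t)) Φ)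
    (hB : ContinuousOn B S) (hD : ContinuousOn D S) {P : ℝ → Matrix m l ℝ}
    (hP : ∀ t ∈ S, ∀ i j, HasDerivWithinAt (fun τ ↦ P τ i j)
      ((D t * P t - P t * A t - P t * B t * P t + C t) i j) S t)
    {s : ℝ} (hs : s ∈ S) :
    (Φ s s).toBlocks₁₁ + (Φ s s).toBlocks₁₂ * P s = 1 ∧
    ∀ t ∈ S, ∀ i j, HasDerivWithinAt
      (fun τ ↦ ((Φ τ s).toBlocks₁₁ + (Φ τ s).toBlocks₁₂ * P s) i j)
      (((A t + B t * P t) * ((Φ t s).toBlocks₁₁ + (Φ t s).toBlocks₁₂ * P s)) i j) S t := by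
  simp only [← hasDerivWithinAt_matrix_iff] at hP ⊢
  have hflow (t : ℝ) := hΦ.hasDerivWithinAt_mul (fromRows (1 : Matrix l l ℝ) (P s)) S s t
  simp only [mul_fromRows_one, fromBlocks_mul_fromRows, hasDerivWithinAt_fromRows_iff] at hflow
  have hinit : (Φ s s).toBlocks₁₁ + (Φ s s).toBlocks₁₂ * P s = 1 ∧
      (Φ s s).toBlocks₂₁ + (Φ s s).toBlocks₂₂ * P s = P s := by
    rw [← fromRows_ext_iff, ← mul_fromRows_one, hΦ.1, Matrix.one_mul]
  refine ⟨hinit.1, fun t ht ↦ hasDerivWithinAt_closedLoop_of_riccati hS hB hD hP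
    (fun t _ ↦ (hflow t).1) (fun t _ ↦ (hflow t).2) hs ?_ ht⟩
  rw [hinit.1, hinit.2, Matrix.mul_one]

theorem stmt_8 {n p : ℕ} (hn : 1 ≤ n) (hp : 1 ≤ p)
    (A Q : ℝ → Matrix (Fin n) (Fin n) ℝ) (B : ℝ → Matrix (Fin n) (Fin p) ℝ)
    (hA : Continuous A) (hB : Continuous B) (hQ : Continuous Q)
    (hQpsd : ∀ t, (Q t).PosSemidef)
    (Φ : ℝ → ℝ → Matrix (Fin n ⊕ Fin n) (Fin n ⊕ Fin n) ℝ)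
    (hΦ : IsSTM (fun t => fromBlocks (A t) (-(B t * (B t)ᵀ)) (-(Q t)) (-(A t)ᵀ)) Φ)
    (P : ℝ → Matrix (Fin n) (Fin n) ℝ)
    (hPsym : ∀ t ∈ Set.Icc (0:ℝ) 1, (P t)ᵀ = P t)
    (hPric : ∀ t ∈ Set.Icc (0:ℝ) 1, ∀ (i j : Fin n),
      HasDerivWithinAt (fun τ : ℝ => P τ i j)
        ((-(A t)ᵀ * P t - P t * A t + P t * (B t * (B t)ᵀ) * P t - Q t) i j)
        (Set.Icc (0:ℝ) 1) t)
    (s : ℝ) (hs : s ∈ Set.Icc (0:ℝ) 1) :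
    (Φ s s).toBlocks₁₁ + (Φ s s).toBlocks₁₂ * P s = 1 ∧
    ∀ t ∈ Set.Icc (0:ℝ) 1, ∀ (i j : Fin n),
      HasDerivWithinAt
        (fun τ : ℝ => ((Φ τ s).toBlocks₁₁ + (Φ τ s).toBlocks₁₂ * P s) i j)
        (((A t - B t * (B t)ᵀ * P t) *
          ((Φ t s).toBlocks₁₁ + (Φ t s).toBlocks₁₂ * P s)) i j)
        (Set.Icc (0:ℝ) 1) t := by
  simpa only [neg_mul, ← sub_eq_add_neg] using stmt_8_general Set.ordConnected_Icc hΦ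
    (hB.matrix_mul hB.matrix_transpose).neg.continuousOn hA.matrix_transpose.neg.continuousOn
    (by simpa only [neg_mul, mul_neg, sub_neg_eq_add, ← sub_eq_add_neg] using hPric) hs
end

section
/- Suppose the Riccati equation Π'(t) = −A(t)ᵀΠ − ΠA(t) + ΠB(t)R(t)⁻¹B(t)ᵀΠ − Q(t) has a symmetric solution Π on an interval I, and let Φ_Π(t,s) denote the state transition matrix of A(t) − B(t)R(t)⁻¹B(t)ᵀΠ(t). Then for all t, s ∈ I, ∫ₛᵗ Φ_Π(t,τ) B(τ)R(τ)⁻¹B(τ)ᵀ Φ_Π(t,τ)ᵀ dτ = −Φ₁₂(t,s)Φ_Π(t,s)ᵀ. -/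
/-!
Write `S = B R⁻¹ Bᵀ`, `G = A - S P`, and let `X`, `Y` be the blocks `Φ₁₂(·, s)`, `Φ₂₂(·, s)` of the
Hamiltonian flow, so that `X' = A X - S Y`, `Y' = -Q X - Aᵀ Y`, `X(s) = 0`, `Y(s) = 1`. By the
Riccati equation, `Z = Y - P X` solves the adjoint equation `Z' = -Gᵀ Z`, `Z(s) = 1`, while
`X' = G X - S Z`. The adjoint solution propagates the closed-loop flow in its second variable:
`Φ_P(t, τ) = Φ_P(t, s) Z(τ)ᵀ`. Hence the derivative of `Φ_P(t, τ) X(τ) Φ_P(t, s)ᵀ` in `τ` is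
`-Φ_P(t, τ) S(τ) Φ_P(t, τ)ᵀ`, and integrating from `s`, where `X` vanishes, to `t` gives the claim.
-/

open Matrix

section Calculus

lemma eq_of_hasDerivWithinAt_zero {𝕜 E : Type*} [RCLike 𝕜] [NormedAddCommGroup E]
    [NormedSpace 𝕜 E] {f : 𝕜 → E} {I : Set 𝕜} (hI : Convex ℝ I)
    (hf : ∀ t ∈ I, HasDerivWithinAt f 0 I t) {s t : 𝕜} (hs : s ∈ I) (ht : t ∈ I) : f t = f s := by
  have h := hI.norm_image_sub_le_of_norm_hasDerivWithin_le (C := 0) hf (by simp) hs ht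
  simpa [sub_eq_zero] using h

lemma integral_eq_sub_of_hasDerivWithinAt_ordConnected {E : Type*} [NormedAddCommGroup E]
    [NormedSpace ℝ E] [CompleteSpace E] {f f' : ℝ → E} {I : Set ℝ} (hI : I.OrdConnected)
    (hf : ∀ t ∈ I, HasDerivWithinAt f (f' t) I t) (hf' : ContinuousOn f' I)
    {s t : ℝ} (hs : s ∈ I) (ht : t ∈ I) : ∫ τ in s..t, f' τ = f t - f s := by
  have hst : Set.uIcc s t ⊆ I := hI.uIcc_subset hs ht
  refine intervalIntegral.integral_eq_sub_of_hasDeriv_right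
    ((HasDerivWithinAt.continuousOn hf).mono hst) (fun τ hτ => ?_) (hf'.mono hst).intervalIntegrable
  have hIτ : I ∈ nhds τ := Filter.mem_of_superset (Icc_mem_nhds hτ.1 hτ.2) hst
  exact ((hf τ (mem_of_mem_nhds hIτ)).hasDerivAt hIτ).hasDerivWithinAt

variable {𝕜 E m n k l : Type*} [NontriviallyNormedField 𝕜] [NormedAddCommGroup E]
  [NormedSpace 𝕜 E] [Finite n] {M : 𝕜 → Matrix m n E} {M' : Matrix m n E} {I : Set 𝕜} {t : 𝕜}

lemma hasDerivWithinAt_matrix :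
    HasDerivWithinAt M M' I t ↔ ∀ i j, HasDerivWithinAt (fun τ => M τ i j) (M' i j) I t := by
  have := Fintype.ofFinite n
  exact hasDerivWithinAt_pi.trans (forall_congr' fun _ => hasDerivWithinAt_pi)

lemma hasDerivWithinAt_matrix_transpose [Finite m] (hM : HasDerivWithinAt M M' I t) :
    HasDerivWithinAt (fun τ => (M τ)ᵀ) M'ᵀ I t :=
  hasDerivWithinAt_matrix.2 fun i j => hasDerivWithinAt_matrix.1 hM j i

lemma hasDerivWithinAt_matrix_submatrix [Finite l] (hM : HasDerivWithinAt M M' I t)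
    (f : k → m) (g : l → n) :
    HasDerivWithinAt (fun τ => (M τ).submatrix f g) (M'.submatrix f g) I t :=
  hasDerivWithinAt_matrix.2 fun i j => hasDerivWithinAt_matrix.1 hM (f i) (g j)

end Calculus

section Matrix

variable {m n : Type*} [Fintype m] [DecidableEq m]

lemma continuous_matrix_inv {X K : Type*} [TopologicalSpace X] [Field K] [TopologicalSpace K]
    [IsTopologicalRing K] [ContinuousInv₀ K] {M : X → Matrix m m K} (hM : Continuous M)
    (hdet : ∀ x, (M x).det ≠ 0) : Continuous fun x => (M x)⁻¹ := by
  refine continuous_iff_continuousAt.2 fun x =>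
    (continuousAt_matrix_inv (M x) ?_).comp hM.continuousAt
  simpa only [Ring.inverse_eq_inv'] using continuousAt_inv₀ (hdet x)

lemma continuous_mul_inv_mul_transpose {X K : Type*} [TopologicalSpace X] [Field K]
    [TopologicalSpace K] [IsTopologicalRing K] [ContinuousInv₀ K] {B : X → Matrix n m K}
    {R : X → Matrix m m K} (hB : Continuous B) (hR : Continuous R) (hdet : ∀ x, (R x).det ≠ 0) :
    Continuous fun x => B x * (R x)⁻¹ * (B x)ᵀ :=
  (hB.matrix_mul (continuous_matrix_inv hR hdet)).matrix_mul hB.matrix_transpose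

lemma isSymm_mul_inv_mul_transpose {α : Type*} [CommRing α] {R : Matrix m m α} (hR : R.IsSymm)
    (B : Matrix n m α) : (B * R⁻¹ * Bᵀ).IsSymm := by
  simp only [IsSymm, transpose_mul, transpose_transpose, hR.inv.eq, Matrix.mul_assoc]

end Matrix

section TransitionMatrix

variable {ι : Type*} [Fintype ι] {I : Set ℝ} {s t τ : ℝ}

/-- `W` solves on `I` the equation `W' = -W F` adjoint to `X' = F X`; the solutions are written as
row matrices, so `W` is the transpose of a solution of `Z' = -Fᵀ Z`. -/
def IsAdjointSolutionOn (F W : ℝ → Matrix ι ι ℝ) (I : Set ℝ) : Prop :=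
  ∀ t ∈ I, HasDerivWithinAt W (-(W t * F t)) I t

section Riccati

open scoped Matrix.Norms.Operator

variable {A Q S P X Y : ℝ → Matrix ι ι ℝ}

/-- `P` solves on `I` the Riccati equation attached to the Hamiltonian matrix
`[[A, -S], [-Q, -Aᵀ]]`; in the linear-quadratic regulator problem `S = B R⁻¹ Bᵀ`. -/
def IsRiccatiSolutionOn (A Q S P : ℝ → Matrix ι ι ℝ) (I : Set ℝ) : Prop :=
  ∀ t ∈ I, HasDerivWithinAt P (-(A t)ᵀ * P t - P t * A t + P t * S t * P t - Q t) I t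

lemma IsRiccatiSolutionOn.hasDerivWithinAt_sub_mul (hP : IsRiccatiSolutionOn A Q S P I)
    (hX : HasDerivWithinAt X (A t * X t + -S t * Y t) I t)
    (hY : HasDerivWithinAt Y (-Q t * X t + -(A t)ᵀ * Y t) I t) (ht : t ∈ I) :
    HasDerivWithinAt (fun τ => Y τ - P τ * X τ)
      (-(((A t)ᵀ - P t * S t) * (Y t - P t * X t))) I t := by
  classical
  exact (hY.fun_sub ((hP t ht).mul hX)).congr_deriv (by noncomm_ring)

lemma IsRiccatiSolutionOn.isAdjointSolutionOn (hP : IsRiccatiSolutionOn A Q S P I)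
    (hPsymm : ∀ t ∈ I, (P t).IsSymm) (hSsymm : ∀ t ∈ I, (S t).IsSymm)
    (hX : ∀ t ∈ I, HasDerivWithinAt X (A t * X t + -S t * Y t) I t)
    (hY : ∀ t ∈ I, HasDerivWithinAt Y (-Q t * X t + -(A t)ᵀ * Y t) I t) :
    IsAdjointSolutionOn (fun t => A t - S t * P t) (fun t => (Y t - P t * X t)ᵀ) I := by
  intro t ht
  have hclosed : ((A t)ᵀ - P t * S t)ᵀ = A t - S t * P t := by
    rw [transpose_sub, transpose_mul, transpose_transpose, (hPsymm t ht).eq, (hSsymm t ht).eq]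
  have hZ := hasDerivWithinAt_matrix_transpose
    (hP.hasDerivWithinAt_sub_mul (hX t ht) (hY t ht) ht)
  rwa [transpose_neg, transpose_mul, hclosed] at hZ

end Riccati

variable [DecidableEq ι]

/-- `Φ` is the state transition matrix of `F` on `I`: the analogue of `IsSTM` for a coefficient
that matters only on `I`, with matrix-valued derivatives taken within `I`. -/
structure IsSTMOn (F : ℝ → Matrix ι ι ℝ) (Φ : ℝ → ℝ → Matrix ι ι ℝ) (I : Set ℝ) : Prop where
  self_eq_one : ∀ s ∈ I, Φ s s = 1
  hasDerivWithinAt : ∀ s ∈ I, ∀ t ∈ I, HasDerivWithinAt (fun τ => Φ τ s) (F t * Φ t s) I t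

lemma isSTMOn_iff_entries {F : ℝ → Matrix ι ι ℝ} {Φ : ℝ → ℝ → Matrix ι ι ℝ} :
    IsSTMOn F Φ I ↔ ∀ s ∈ I, Φ s s = 1 ∧ ∀ t ∈ I, ∀ i j,
      HasDerivWithinAt (fun τ => Φ τ s i j) ((F t * Φ t s) i j) I t := by
  simp only [← hasDerivWithinAt_matrix]
  exact ⟨fun h s hs => ⟨h.self_eq_one s hs, h.hasDerivWithinAt s hs⟩,
    fun h => ⟨fun s hs => (h s hs).1, fun s hs => (h s hs).2⟩⟩

lemma IsSTM.isSTMOn {F : ℝ → Matrix ι ι ℝ} {Φ : ℝ → ℝ → Matrix ι ι ℝ} (hΦ : IsSTM F Φ)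
    (I : Set ℝ) : IsSTMOn F Φ I :=
  isSTMOn_iff_entries.2 fun s _ =>
    ⟨hΦ.1 s, fun t _ i j => (hΦ.2 s t i j).hasDerivWithinAt⟩

namespace IsSTMOn

open scoped Matrix.Norms.Operator

section Adjoint

variable {G S W X : ℝ → Matrix ι ι ℝ} {Ψ : ℝ → ℝ → Matrix ι ι ℝ}

lemma adjoint_mul_eq (hΨ : IsSTMOn G Ψ I) (hI : I.OrdConnected)
    (hW : IsAdjointSolutionOn G W I) (hs : s ∈ I) (ht : t ∈ I) :
    W t * Ψ t s = W s := by
  have hconst : ∀ τ ∈ I, HasDerivWithinAt (fun σ => W σ * Ψ σ s) 0 I τ := fun τ hτ =>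
    ((hW τ hτ).mul (hΨ.hasDerivWithinAt s hs τ hτ)).congr_deriv (by noncomm_ring)
  simpa only [hΨ.self_eq_one s hs, mul_one] using
    eq_of_hasDerivWithinAt_zero hI.convex hconst hs ht

lemma mul_adjoint_eq (hΨ : IsSTMOn G Ψ I) (hI : I.OrdConnected)
    (hW : IsAdjointSolutionOn G W I) (hWs : W s = 1)
    (hs : s ∈ I) (hτ : τ ∈ I) (ht : t ∈ I) : Ψ t s * W τ = Ψ t τ := by
  have hinv : Ψ t s * W t = 1 := mul_eq_one_comm.1 ((hΨ.adjoint_mul_eq hI hW hs ht).trans hWs)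
  rw [← hΨ.adjoint_mul_eq hI hW hτ ht, ← mul_assoc, hinv, one_mul]

lemma hasDerivWithinAt_right (hΨ : IsSTMOn G Ψ I) (hI : I.OrdConnected)
    (hW : IsAdjointSolutionOn G W I) (hWs : W s = 1)
    (hs : s ∈ I) (hτ : τ ∈ I) (ht : t ∈ I) :
    HasDerivWithinAt (fun σ => Ψ t σ) (-(Ψ t τ * G τ)) I τ := by
  have hfactor : ∀ σ ∈ I, Ψ t σ = Ψ t s * W σ := fun σ hσ =>
    (hΨ.mul_adjoint_eq hI hW hWs hs hσ ht).symm
  refine (((hW τ hτ).const_mul (Ψ t s)).congr hfactor (hfactor τ hτ)).congr_deriv ?_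
  rw [hfactor τ hτ, mul_neg, mul_assoc]

lemma hasDerivWithinAt_mul_mul_transpose (hΨ : IsSTMOn G Ψ I) (hI : I.OrdConnected)
    (hW : IsAdjointSolutionOn G W I) (hWs : W s = 1)
    (hX : ∀ t ∈ I, HasDerivWithinAt X (G t * X t - S t * (W t)ᵀ) I t)
    (hs : s ∈ I) (hτ : τ ∈ I) (ht : t ∈ I) :
    HasDerivWithinAt (fun σ => Ψ t σ * X σ * (Ψ t s)ᵀ) (-(Ψ t τ * S τ * (Ψ t τ)ᵀ)) I τ := by
  have hderiv := ((hΨ.hasDerivWithinAt_right hI hW hWs hs hτ ht).mul (hX τ hτ)).mul_const (Ψ t s)ᵀ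
  refine hderiv.congr_deriv ?_
  have hΨτ : (Ψ t τ)ᵀ = (W τ)ᵀ * (Ψ t s)ᵀ := by
    rw [← hΨ.mul_adjoint_eq hI hW hWs hs hτ ht, transpose_mul]
  rw [hΨτ]
  noncomm_ring

theorem integral_mul_mul_transpose_eq (hΨ : IsSTMOn G Ψ I) (hI : I.OrdConnected)
    (hS : ContinuousOn S I) (hW : IsAdjointSolutionOn G W I) (hWs : W s = 1)
    (hX : ∀ t ∈ I, HasDerivWithinAt X (G t * X t - S t * (W t)ᵀ) I t) (hXs : X s = 0)
    (hs : s ∈ I) (ht : t ∈ I) (i j : ι) :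
    ∫ τ in s..t, (Ψ t τ * S τ * (Ψ t τ)ᵀ) i j = (-(X t * (Ψ t s)ᵀ)) i j := by
  have hprim : ∀ τ ∈ I, HasDerivWithinAt (fun σ => -(Ψ t σ * X σ * (Ψ t s)ᵀ))
      (Ψ t τ * S τ * (Ψ t τ)ᵀ) I τ := fun τ hτ => by
    have hderiv := (hΨ.hasDerivWithinAt_mul_mul_transpose hI hW hWs hX hs hτ ht).fun_neg
    rwa [neg_neg] at hderiv
  have hΨc : ContinuousOn (fun τ => Ψ t τ) I := HasDerivWithinAt.continuousOn fun τ hτ =>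
    hΨ.hasDerivWithinAt_right hI hW hWs hs hτ ht
  have hcont : ContinuousOn (fun τ => Ψ t τ * S τ * (Ψ t τ)ᵀ) I := by fun_prop
  have hFTC := integral_eq_sub_of_hasDerivWithinAt_ordConnected hI
    (fun τ hτ => hasDerivWithinAt_matrix.1 (hprim τ hτ) i j)
    (continuousOn_pi.1 (continuousOn_pi.1 hcont i) j) hs ht
  simpa [hXs, hΨ.self_eq_one t ht] using hFTC

end Adjoint

section Blocks

variable {κ : Type*} [Fintype κ] [DecidableEq κ] {A : ℝ → Matrix ι ι ℝ} {B : ℝ → Matrix ι κ ℝ}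
  {C : ℝ → Matrix κ ι ℝ} {D : ℝ → Matrix κ κ ℝ} {F : ℝ → Matrix (ι ⊕ κ) (ι ⊕ κ) ℝ}
  {Φ : ℝ → ℝ → Matrix (ι ⊕ κ) (ι ⊕ κ) ℝ}

lemma hasDerivWithinAt_toBlocks₁₂
    (hΦ : IsSTMOn (fun t => fromBlocks (A t) (B t) (C t) (D t)) Φ I) (hs : s ∈ I) (ht : t ∈ I) :
    HasDerivWithinAt (fun τ => (Φ τ s).toBlocks₁₂)
      (A t * (Φ t s).toBlocks₁₂ + B t * (Φ t s).toBlocks₂₂) I t := by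
  refine (hasDerivWithinAt_matrix_submatrix (hΦ.hasDerivWithinAt s hs t ht)
    Sum.inl Sum.inr).congr_deriv ?_
  conv_lhs => rw [← fromBlocks_toBlocks (Φ t s), fromBlocks_multiply]
  rfl

lemma hasDerivWithinAt_toBlocks₂₂
    (hΦ : IsSTMOn (fun t => fromBlocks (A t) (B t) (C t) (D t)) Φ I) (hs : s ∈ I) (ht : t ∈ I) :
    HasDerivWithinAt (fun τ => (Φ τ s).toBlocks₂₂)
      (C t * (Φ t s).toBlocks₁₂ + D t * (Φ t s).toBlocks₂₂) I t := by
  refine (hasDerivWithinAt_matrix_submatrix (hΦ.hasDerivWithinAt s hs t ht)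
    Sum.inr Sum.inr).congr_deriv ?_
  conv_lhs => rw [← fromBlocks_toBlocks (Φ t s), fromBlocks_multiply]
  rfl

lemma toBlocks₁₂_self (hΦ : IsSTMOn F Φ I) (hs : s ∈ I) :
    (Φ s s).toBlocks₁₂ = 0 := by
  rw [hΦ.self_eq_one s hs, ← fromBlocks_one, toBlocks_fromBlocks₁₂]

lemma toBlocks₂₂_self (hΦ : IsSTMOn F Φ I) (hs : s ∈ I) :
    (Φ s s).toBlocks₂₂ = 1 := by
  rw [hΦ.self_eq_one s hs, ← fromBlocks_one, toBlocks_fromBlocks₂₂]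

end Blocks

end IsSTMOn

theorem stmt_9_general {A Q S P : ℝ → Matrix ι ι ℝ} {Φ : ℝ → ℝ → Matrix (ι ⊕ ι) (ι ⊕ ι) ℝ}
    {Ψ : ℝ → ℝ → Matrix ι ι ℝ} (hI : I.OrdConnected)
    (hS : ContinuousOn S I) (hSsymm : ∀ t ∈ I, (S t).IsSymm)
    (hΦ : IsSTMOn (fun t => fromBlocks (A t) (-S t) (-Q t) (-(A t)ᵀ)) Φ I)
    (hPsymm : ∀ t ∈ I, (P t).IsSymm) (hP : IsRiccatiSolutionOn A Q S P I)
    (hΨ : IsSTMOn (fun t => A t - S t * P t) Ψ I) (ht : t ∈ I) (hs : s ∈ I) (i j : ι) :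
    ∫ τ in s..t, (Ψ t τ * S τ * (Ψ t τ)ᵀ) i j = (-((Φ t s).toBlocks₁₂ * (Ψ t s)ᵀ)) i j := by
  have hX τ (hτ : τ ∈ I) := hΦ.hasDerivWithinAt_toBlocks₁₂ hs hτ
  have hY τ (hτ : τ ∈ I) := hΦ.hasDerivWithinAt_toBlocks₂₂ hs hτ
  have hZs : ((Φ s s).toBlocks₂₂ - P s * (Φ s s).toBlocks₁₂)ᵀ = 1 := by
    rw [hΦ.toBlocks₁₂_self hs, hΦ.toBlocks₂₂_self hs, mul_zero, sub_zero, transpose_one]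
  have hW := hP.isAdjointSolutionOn hPsymm hSsymm hX hY
  have hX' τ (hτ : τ ∈ I) : HasDerivWithinAt (fun σ => (Φ σ s).toBlocks₁₂)
      ((A τ - S τ * P τ) * (Φ τ s).toBlocks₁₂ -
        S τ * ((Φ τ s).toBlocks₂₂ - P τ * (Φ τ s).toBlocks₁₂)ᵀᵀ) I τ := by
    convert hX τ hτ using 1
    rw [transpose_transpose]
    noncomm_ring
  exact hΨ.integral_mul_mul_transpose_eq hI hS hW hZs hX' (hΦ.toBlocks₁₂_self hs) hs ht i j

end TransitionMatrix

theorem stmt_9 {n p : ℕ} (hn : 1 ≤ n) (hp : 1 ≤ p)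
    (A Q : ℝ → Matrix (Fin n) (Fin n) ℝ) (B : ℝ → Matrix (Fin n) (Fin p) ℝ)
    (R : ℝ → Matrix (Fin p) (Fin p) ℝ)
    (hA : Continuous A) (hB : Continuous B) (hQ : Continuous Q) (hR : Continuous R)
    (hQpsd : ∀ t, (Q t).PosSemidef) (hRpd : ∀ t, (R t).PosDef)
    (Φ : ℝ → ℝ → Matrix (Fin n ⊕ Fin n) (Fin n ⊕ Fin n) ℝ)
    (hΦ : IsSTM (fun t => fromBlocks (A t) (-(B t * (R t)⁻¹ * (B t)ᵀ))
      (-(Q t)) (-(A t)ᵀ)) Φ)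
    (I : Set ℝ) (hI : I.OrdConnected)
    (P : ℝ → Matrix (Fin n) (Fin n) ℝ)
    (hPsym : ∀ t ∈ I, (P t)ᵀ = P t)
    (hPric : ∀ t ∈ I, ∀ (i j : Fin n),
      HasDerivWithinAt (fun τ : ℝ => P τ i j)
        ((-(A t)ᵀ * P t - P t * A t + P t * (B t * (R t)⁻¹ * (B t)ᵀ) * P t - Q t) i j)
        I t)
    (ΦP : ℝ → ℝ → Matrix (Fin n) (Fin n) ℝ)
    (hΦP : ∀ s ∈ I, ΦP s s = 1 ∧
      ∀ t ∈ I, ∀ (i j : Fin n),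
        HasDerivWithinAt (fun τ : ℝ => ΦP τ s i j)
          (((A t - B t * (R t)⁻¹ * (B t)ᵀ * P t) * ΦP t s) i j) I t) :
    ∀ t ∈ I, ∀ s ∈ I, ∀ (i j : Fin n),
      (∫ τ in s..t, (ΦP t τ * (B τ * (R τ)⁻¹ * (B τ)ᵀ) * (ΦP t τ)ᵀ) i j) =
        (-((Φ t s).toBlocks₁₂ * (ΦP t s)ᵀ)) i j := by
  intro t ht s hs i j
  exact stmt_9_general (S := fun τ => B τ * (R τ)⁻¹ * (B τ)ᵀ) hI
    (continuous_mul_inv_mul_transpose hB hR fun τ => (hRpd τ).det_pos.ne').continuousOn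
    (fun τ _ => isSymm_mul_inv_mul_transpose (isHermitian_iff_isSymm.1 (hRpd τ).isHermitian) (B τ))
    (hΦ.isSTMOn I) hPsym (fun τ hτ => hasDerivWithinAt_matrix.2 (hPric τ hτ))
    (isSTMOn_iff_entries.2 hΦP) ht hs i j
end

section
/- Suppose the Riccati equation Π'(t) = −A(t)ᵀΠ − ΠA(t) + ΠB(t)B(t)ᵀΠ − Q(t) has a symmetric solution Π on [0,1], and let Σ : [0,1] → ℝ^{n×n} solve the Lyapunov differential equation Σ'(t) = (A(t) − B(t)B(t)ᵀΠ(t))Σ(t) + Σ(t)(A(t) − B(t)B(t)ᵀΠ(t))ᵀ + C(t)D(t)C(t)ᵀ with Σ(0) = Σ₀, where Σ₀ is symmetric positive semidefinite. Then for all t ∈ [0,1], Σ(t) = Φ_cl(t,0)Σ₀Φ_cl(t,0)ᵀ + ∫₀ᵗ Φ_cl(t,s) C(s)D(s)C(s)ᵀ Φ_cl(t,s)ᵀ ds, where Φ_cl(t,s) = Φ₁₁(t,s) + Φ₁₂(t,s)Π(s). -/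
open Matrix

/-!
Write `G P` for the block column with blocks `1` and `P`, so that `Φ_cl(t,s) = [1 0] Φ(t,s) G Π(s)`.
The Riccati equation says that the graph of `Π` is invariant under the Hamiltonian flow: with
`K = A - B Bᵀ Π` it reads `M (G Π) = (G Π) K + [0; Π']`. By uniqueness for linear differential
equations, `Φ(t,s)` is the inverse of `Φ(s,t)`, so `∂Φ(t,s)/∂s = -Φ(t,s) M(s)`; hence
`Ψ(s) = Φ_cl(t,s)` satisfies `Ψ' = -Ψ K`. Consequently `(Ψ Σ Ψᵀ)' = Ψ C D Cᵀ Ψᵀ`, and integrating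
over `[0,t]` with `Ψ(t) = 1` gives the formula.
-/

section LinearODE

open Set

theorem eq_of_hasDerivAt_continuousLinearMap_apply {E : Type*} [NormedAddCommGroup E]
    [NormedSpace ℝ E] {L : ℝ → E →L[ℝ] E} (hL : Continuous L) {x y : ℝ → E}
    (hx : ∀ t, HasDerivAt x (L t (x t)) t) (hy : ∀ t, HasDerivAt y (L t (y t)) t) {t₀ : ℝ}
    (h : x t₀ = y t₀) : x = y := by
  ext t
  obtain ⟨a, b, ht, ht₀⟩ : ∃ a b, t ∈ Ioo a b ∧ t₀ ∈ Ioo a b :=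
    ⟨min t t₀ - 1, max t t₀ + 1, by grind, by grind⟩
  obtain ⟨K, hK⟩ := (isCompact_Icc (a := a) (b := b)).exists_bound_of_continuousOn hL.continuousOn
  have hLip : ∀ τ ∈ Ioo a b, LipschitzOnWith K.toNNReal (L τ) univ := fun τ hτ =>
    ((L τ).lipschitz.weaken
      (NNReal.le_toNNReal_of_coe_le (hK τ (Ioo_subset_Icc_self hτ)))).lipschitzOnWith
  exact ODE_solution_unique_of_mem_Ioo hLip ht₀ (fun τ _ => ⟨hx τ, mem_univ _⟩)
    (fun τ _ => ⟨hy τ, mem_univ _⟩) h ht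

variable {R : Type*} [NormedRing R] [NormedAlgebra ℝ R] {M : ℝ → R} {Φ : ℝ → ℝ → R}

theorem transition_mul_transition (hM : Continuous M) (hΦ₁ : ∀ s, Φ s s = 1)
    (hΦ : ∀ s t, HasDerivAt (Φ · s) (M t * Φ t s) t) (t s r : ℝ) : Φ t s * Φ s r = Φ t r := by
  have hL : Continuous fun t => ContinuousLinearMap.mul ℝ R (M t) :=
    (ContinuousLinearMap.mul ℝ R).continuous.comp hM
  have hleft : ∀ τ, HasDerivAt (fun τ => Φ τ s * Φ s r) (M τ * (Φ τ s * Φ s r)) τ := fun τ => by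
    simpa only [mul_assoc] using (hΦ s τ).mul_const (Φ s r)
  exact congrFun (eq_of_hasDerivAt_continuousLinearMap_apply hL hleft (hΦ r) (t₀ := s)
    (by rw [hΦ₁, one_mul])) t

theorem hasDerivAt_transition_right [CompleteSpace R] (hM : Continuous M)
    (hΦ₁ : ∀ s, Φ s s = 1) (hΦ : ∀ s t, HasDerivAt (Φ · s) (M t * Φ t s) t) (t s : ℝ) :
    HasDerivAt (Φ t ·) (-(Φ t s * M s)) s := by
  have hmul : ∀ t s, Φ t s * Φ s t = 1 := fun t s =>
    (transition_mul_transition hM hΦ₁ hΦ t s t).trans (hΦ₁ t)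
  let u : ℝ → Rˣ := fun τ => ⟨Φ τ t, Φ t τ, hmul τ t, hmul t τ⟩
  have hinv : (Φ t ·) = fun τ => Ring.inverse (Φ τ t) :=
    funext fun τ => (Ring.inverse_unit (u τ)).symm
  rw [hinv]
  convert! (hasFDerivAt_ringInverse (𝕜 := ℝ) (u s)).comp_hasDerivAt s (hΦ t s) using 1
  calc -(Φ t s * M s) = -(Φ t s * (M s * Φ s t) * Φ t s) := by
        rw [mul_assoc, mul_assoc, hmul, mul_one]
    _ = (-ContinuousLinearMap.mulLeftRight ℝ R (Φ t s) (Φ t s)) (M s * Φ s t) := by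
        rw [_root_.neg_apply, ContinuousLinearMap.mulLeftRight_apply]

end LinearODE

section MatrixCalculus

variable {𝕜 l m n : Type*} [NontriviallyNormedField 𝕜] {t : 𝕜} {s : Set 𝕜}

theorem hasDerivAt_matrix_s10 [Finite l] [Finite m] {X : 𝕜 → Matrix l m 𝕜} {X' : Matrix l m 𝕜} :
    HasDerivAt X X' t ↔ ∀ i j, HasDerivAt (X · i j) (X' i j) t := by
  have := Fintype.ofFinite l
  have := Fintype.ofFinite m
  exact (hasDerivAt_pi (E' := fun _ : l => m → 𝕜)).trans (forall_congr' fun _ => hasDerivAt_pi)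

theorem hasDerivWithinAt_matrix_s10 [Finite l] [Finite m] {X : 𝕜 → Matrix l m 𝕜}
    {X' : Matrix l m 𝕜} :
    HasDerivWithinAt X X' s t ↔ ∀ i j, HasDerivWithinAt (X · i j) (X' i j) s t := by
  have := Fintype.ofFinite l
  have := Fintype.ofFinite m
  exact (hasDerivWithinAt_pi (E' := fun _ : l => m → 𝕜)).trans
    (forall_congr' fun _ => hasDerivWithinAt_pi)

theorem hasDerivWithinAt_matrix_mono [Finite l] [Finite m] {X : 𝕜 → Matrix l m 𝕜}
    {X' : Matrix l m 𝕜} {u : Set 𝕜} (hX : HasDerivWithinAt X X' u t) (hsu : s ⊆ u) :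
    HasDerivWithinAt X X' s t :=
  hasDerivWithinAt_matrix_s10.2 fun i j => (hasDerivWithinAt_matrix_s10.1 hX i j).mono hsu

theorem hasDerivWithinAt_matrix_mul_s10 [Finite l] [Fintype m] [Finite n] {X : 𝕜 → Matrix l m 𝕜}
    {X' : Matrix l m 𝕜} {Y : 𝕜 → Matrix m n 𝕜} {Y' : Matrix m n 𝕜}
    (hX : HasDerivWithinAt X X' s t) (hY : HasDerivWithinAt Y Y' s t) :
    HasDerivWithinAt (fun τ => X τ * Y τ) (X' * Y t + X t * Y') s t := by
  rw [hasDerivWithinAt_matrix_s10] at *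
  intro i j
  simp only [Matrix.mul_apply, Matrix.add_apply, ← Finset.sum_add_distrib]
  exact HasDerivWithinAt.fun_sum fun k _ => (hX i k).mul (hY k j)

theorem hasDerivWithinAt_matrix_transpose_s10 [Finite l] [Finite m] {X : 𝕜 → Matrix l m 𝕜}
    {X' : Matrix l m 𝕜} (hX : HasDerivWithinAt X X' s t) :
    HasDerivWithinAt (fun τ => (X τ)ᵀ) X'ᵀ s t := by
  rw [hasDerivWithinAt_matrix_s10] at *
  exact fun i j => hX j i

theorem continuousOn_of_hasDerivWithinAt_matrix [Finite l] [Finite m] {X X' : 𝕜 → Matrix l m 𝕜}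
    (hX : ∀ t ∈ s, HasDerivWithinAt X (X' t) s t) : ContinuousOn X s :=
  continuousOn_pi.2 fun i => continuousOn_pi.2 fun j t ht =>
    (hasDerivWithinAt_matrix_s10.1 (hX t ht) i j).continuousWithinAt

end MatrixCalculus

theorem IsSTM.hasDerivAt_right {ι : Type*} [Fintype ι] [DecidableEq ι] {M : ℝ → Matrix ι ι ℝ}
    {Φ : ℝ → ℝ → Matrix ι ι ℝ} (hM : Continuous M) (hΦ : IsSTM M Φ) (t s : ℝ) :
    HasDerivAt (Φ t ·) (-(Φ t s * M s)) s :=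
  open scoped Matrix.Norms.Operator in
  hasDerivAt_transition_right hM hΦ.1 (fun s t => hasDerivAt_matrix_s10.2 (hΦ.2 s t)) t s

section Lyapunov

variable {n : Type*} [Fintype n]

theorem hasDerivWithinAt_conj_of_lyapunov {𝕜 : Type*} [NontriviallyNormedField 𝕜]
    {Ψ S : 𝕜 → Matrix n n 𝕜} {K W : Matrix n n 𝕜} {I : Set 𝕜} {s : 𝕜}
    (hΨ : HasDerivWithinAt Ψ (-(Ψ s * K)) I s)
    (hS : HasDerivWithinAt S (K * S s + S s * Kᵀ + W) I s) :
    HasDerivWithinAt (fun τ => Ψ τ * S τ * (Ψ τ)ᵀ) (Ψ s * W * (Ψ s)ᵀ) I s := by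
  convert hasDerivWithinAt_matrix_mul_s10 (hasDerivWithinAt_matrix_mul_s10 hΨ hS)
    (hasDerivWithinAt_matrix_transpose_s10 hΨ) using 1
  rw [transpose_neg, transpose_mul]
  noncomm_ring

theorem conj_eq_add_integral_of_lyapunov {a b : ℝ} {Ψ S K W : ℝ → Matrix n n ℝ} (hab : a ≤ b)
    (hW : ContinuousOn W (Set.Icc a b))
    (hΨ : ∀ s ∈ Set.Icc a b, HasDerivWithinAt Ψ (-(Ψ s * K s)) (Set.Icc a b) s)
    (hS : ∀ s ∈ Set.Icc a b,
      HasDerivWithinAt S (K s * S s + S s * (K s)ᵀ + W s) (Set.Icc a b) s) (i j : n) :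
    (Ψ b * S b * (Ψ b)ᵀ) i j =
      (Ψ a * S a * (Ψ a)ᵀ) i j + ∫ s in a..b, (Ψ s * W s * (Ψ s)ᵀ) i j := by
  have hderiv : ∀ s ∈ Set.Icc a b, HasDerivWithinAt (fun s => (Ψ s * S s * (Ψ s)ᵀ) i j)
      ((Ψ s * W s * (Ψ s)ᵀ) i j) (Set.Icc a b) s := fun s hs =>
    hasDerivWithinAt_matrix_s10.1 (hasDerivWithinAt_conj_of_lyapunov (hΨ s hs) (hS s hs)) i j
  have hcont : ContinuousOn (fun s => Ψ s * W s * (Ψ s)ᵀ) (Set.Icc a b) := by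
    have hΨc := continuousOn_of_hasDerivWithinAt_matrix hΨ
    exact (hΨc.mul hW).mul (continuous_id.matrix_transpose.comp_continuousOn hΨc)
  rw [intervalIntegral.integral_eq_sub_of_hasDerivAt_of_le hab
    (HasDerivWithinAt.continuousOn hderiv)
    (fun s hs => (hderiv s (Set.Ioo_subset_Icc_self hs)).hasDerivAt (Icc_mem_nhds hs.1 hs.2))
    (ContinuousOn.intervalIntegrable_of_Icc hab (continuousOn_pi.1 (continuousOn_pi.1 hcont i) j))]
  exact (add_sub_cancel _ _).symm

end Lyapunov

section Riccati

variable {R m k p : Type*} [Fintype k]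

/-- The closed-loop matrix of a block matrix `X` under the feedback `P`: the first block row of `X`
restricted to the graph of `P`. For `X = Φ(t,s)` and `P = Π(s)` it is the matrix `Φ_cl(t,s)`, and
for `X` the Hamiltonian matrix it is `A - B Bᵀ P`. -/
def closedLoop [Semiring R] (X : Matrix (m ⊕ k) (m ⊕ k) R) (P : Matrix k m R) : Matrix m m R :=
  X.toBlocks₁₁ + X.toBlocks₁₂ * P

/-- The right-hand side of the matrix Riccati equation with coefficient matrix `X`; for the
Hamiltonian matrix it is `-Aᵀ P - P A + P B Bᵀ P - Q`. It vanishes exactly when the graph of `P` is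
invariant under `X`. -/
def riccati [Ring R] [Fintype m] (X : Matrix (m ⊕ k) (m ⊕ k) R) (P : Matrix k m R) : Matrix k m R :=
  X.toBlocks₂₁ + X.toBlocks₂₂ * P - P * closedLoop X P

theorem closedLoop_one [Semiring R] [DecidableEq m] [DecidableEq k] (P : Matrix k m R) :
    closedLoop 1 P = 1 := by
  simp [closedLoop, ← fromBlocks_one]

theorem closedLoop_neg [Ring R] (X : Matrix (m ⊕ k) (m ⊕ k) R) (P : Matrix k m R) :
    closedLoop (-X) P = -closedLoop X P := by
  rw [closedLoop, closedLoop, neg_add, ← Matrix.neg_mul]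
  rfl

theorem closedLoop_mul [Ring R] [Fintype m] (X Y : Matrix (m ⊕ k) (m ⊕ k) R) (P : Matrix k m R) :
    closedLoop (X * Y) P = closedLoop X P * closedLoop Y P + X.toBlocks₁₂ * riccati Y P := by
  rw [← fromBlocks_toBlocks X, ← fromBlocks_toBlocks Y, fromBlocks_multiply]
  simp only [closedLoop, riccati, toBlocks_fromBlocks₁₁, toBlocks_fromBlocks₁₂,
    toBlocks_fromBlocks₂₁, toBlocks_fromBlocks₂₂, Matrix.add_mul, Matrix.mul_add, Matrix.mul_sub,
    Matrix.mul_assoc]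
  abel

theorem closedLoop_hamiltonian [Ring R] [Fintype m] [Fintype p] (A Q P : Matrix m m R)
    (B : Matrix m p R) :
    closedLoop (fromBlocks A (-(B * Bᵀ)) (-Q) (-Aᵀ)) P = A - B * Bᵀ * P := by
  rw [closedLoop, toBlocks_fromBlocks₁₁, toBlocks_fromBlocks₁₂, Matrix.neg_mul, sub_eq_add_neg]

theorem riccati_hamiltonian [Ring R] [Fintype m] [Fintype p] (A Q P : Matrix m m R)
    (B : Matrix m p R) :
    riccati (fromBlocks A (-(B * Bᵀ)) (-Q) (-Aᵀ)) P =
      -Aᵀ * P - P * A + P * (B * Bᵀ) * P - Q := by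
  rw [riccati, closedLoop_hamiltonian, toBlocks_fromBlocks₂₁, toBlocks_fromBlocks₂₂,
    Matrix.mul_sub, ← Matrix.mul_assoc]
  abel

theorem continuous_hamiltonian [TopologicalSpace R] [Ring R] [IsTopologicalRing R] [Fintype p]
    {T : Type*} [TopologicalSpace T] {A Q : T → Matrix m m R} {B : T → Matrix m p R}
    (hA : Continuous A) (hB : Continuous B) (hQ : Continuous Q) :
    Continuous fun t => fromBlocks (A t) (-(B t * (B t)ᵀ)) (-Q t) (-(A t)ᵀ) :=
  hA.matrix_fromBlocks (hB.matrix_mul hB.matrix_transpose).neg hQ.neg hA.matrix_transpose.neg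

theorem hasDerivWithinAt_closedLoop {𝕜 : Type*} [NontriviallyNormedField 𝕜] [Finite m]
    {I : Set 𝕜} {s : 𝕜}
    {X : 𝕜 → Matrix (m ⊕ k) (m ⊕ k) 𝕜} {X' : Matrix (m ⊕ k) (m ⊕ k) 𝕜}
    {P : 𝕜 → Matrix k m 𝕜} {P' : Matrix k m 𝕜}
    (hX : HasDerivWithinAt X X' I s) (hP : HasDerivWithinAt P P' I s) :
    HasDerivWithinAt (fun τ => closedLoop (X τ) (P τ))
      (closedLoop X' (P s) + (X s).toBlocks₁₂ * P') I s := by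
  have hX₁₂ : HasDerivWithinAt (fun τ => (X τ).toBlocks₁₂) X'.toBlocks₁₂ I s :=
    hasDerivWithinAt_matrix_s10.2 fun i j => hasDerivWithinAt_matrix_s10.1 hX (Sum.inl i) (Sum.inr j)
  have hX₁₂P := hasDerivWithinAt_matrix_s10.1 (hasDerivWithinAt_matrix_mul_s10 hX₁₂ hP)
  rw [closedLoop, add_assoc]
  exact hasDerivWithinAt_matrix_s10.2 fun i j =>
    (hasDerivWithinAt_matrix_s10.1 hX (Sum.inl i) (Sum.inl j)).add (hX₁₂P i j)

variable [Fintype m] [DecidableEq m] [DecidableEq k] {M : ℝ → Matrix (m ⊕ k) (m ⊕ k) ℝ}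
  {Φ : ℝ → ℝ → Matrix (m ⊕ k) (m ⊕ k) ℝ} {P : ℝ → Matrix k m ℝ}

theorem IsSTM.hasDerivWithinAt_closedLoop_right (hM : Continuous M) (hΦ : IsSTM M Φ)
    {I : Set ℝ} {s : ℝ} (hP : HasDerivWithinAt P (riccati (M s) (P s)) I s) (t : ℝ) :
    HasDerivWithinAt (fun τ => closedLoop (Φ t τ) (P τ))
      (-(closedLoop (Φ t s) (P s) * closedLoop (M s) (P s))) I s := by
  have hΦt : HasDerivWithinAt (Φ t ·) (-(Φ t s * M s)) I s := hasDerivWithinAt_matrix_s10.2 fun i j =>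
    (hasDerivAt_matrix_s10.1 (hΦ.hasDerivAt_right hM t s) i j).hasDerivWithinAt
  convert hasDerivWithinAt_closedLoop hΦt hP using 1
  rw [closedLoop_neg, closedLoop_mul]
  abel

theorem stmt_10_general (hM : Continuous M) (hΦ : IsSTM M Φ) {a b : ℝ}
    (hP : ∀ t ∈ Set.Icc a b, HasDerivWithinAt P (riccati (M t) (P t)) (Set.Icc a b) t)
    {W S : ℝ → Matrix m m ℝ} (hW : ContinuousOn W (Set.Icc a b))
    (hS : ∀ t ∈ Set.Icc a b,
      HasDerivWithinAt S
        (closedLoop (M t) (P t) * S t + S t * (closedLoop (M t) (P t))ᵀ + W t) (Set.Icc a b) t) :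
    ∀ t ∈ Set.Icc a b, ∀ i j,
      S t i j = (closedLoop (Φ t a) (P a) * S a * (closedLoop (Φ t a) (P a))ᵀ) i j +
        ∫ s in a..t, (closedLoop (Φ t s) (P s) * W s * (closedLoop (Φ t s) (P s))ᵀ) i j := by
  intro t ht i j
  have hsub : Set.Icc a t ⊆ Set.Icc a b := Set.Icc_subset_Icc_right ht.2
  have hΨ : ∀ s ∈ Set.Icc a t, HasDerivWithinAt (fun s => closedLoop (Φ t s) (P s))
      (-(closedLoop (Φ t s) (P s) * closedLoop (M s) (P s))) (Set.Icc a t) s := fun s hs =>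
    hasDerivWithinAt_matrix_mono
      (hΦ.hasDerivWithinAt_closedLoop_right hM (hP s (hsub hs)) t) hsub
  have hform := conj_eq_add_integral_of_lyapunov ht.1 (hW.mono hsub) hΨ
    (fun s hs => hasDerivWithinAt_matrix_mono (hS s (hsub hs)) hsub) i j
  simpa only [hΦ.1, closedLoop_one, Matrix.one_mul, transpose_one, Matrix.mul_one] using hform

end Riccati

theorem stmt_10 {n p q : ℕ} (hn : 1 ≤ n) (hp : 1 ≤ p) (hq : 1 ≤ q)
    (A Q : ℝ → Matrix (Fin n) (Fin n) ℝ) (B : ℝ → Matrix (Fin n) (Fin p) ℝ)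
    (C : ℝ → Matrix (Fin n) (Fin q) ℝ) (D : ℝ → Matrix (Fin q) (Fin q) ℝ)
    (hA : Continuous A) (hB : Continuous B) (hQ : Continuous Q)
    (hC : Continuous C) (hD : Continuous D)
    (hQpsd : ∀ t, (Q t).PosSemidef) (hDpsd : ∀ t, (D t).PosSemidef)
    (Φ : ℝ → ℝ → Matrix (Fin n ⊕ Fin n) (Fin n ⊕ Fin n) ℝ)
    (hΦ : IsSTM (fun t => fromBlocks (A t) (-(B t * (B t)ᵀ)) (-(Q t)) (-(A t)ᵀ)) Φ)
    (P : ℝ → Matrix (Fin n) (Fin n) ℝ)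
    (hPsym : ∀ t ∈ Set.Icc (0:ℝ) 1, (P t)ᵀ = P t)
    (hPric : ∀ t ∈ Set.Icc (0:ℝ) 1, ∀ (i j : Fin n),
      HasDerivWithinAt (fun τ : ℝ => P τ i j)
        ((-(A t)ᵀ * P t - P t * A t + P t * (B t * (B t)ᵀ) * P t - Q t) i j)
        (Set.Icc (0:ℝ) 1) t)
    (Sig0 : Matrix (Fin n) (Fin n) ℝ) (hSig0 : Sig0.PosSemidef)
    (S : ℝ → Matrix (Fin n) (Fin n) ℝ) (hS0 : S 0 = Sig0)
    (hSode : ∀ t ∈ Set.Icc (0:ℝ) 1, ∀ (i j : Fin n),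
      HasDerivWithinAt (fun τ : ℝ => S τ i j)
        (((A t - B t * (B t)ᵀ * P t) * S t + S t * (A t - B t * (B t)ᵀ * P t)ᵀ +
          C t * D t * (C t)ᵀ) i j)
        (Set.Icc (0:ℝ) 1) t) :
    ∀ t ∈ Set.Icc (0:ℝ) 1, ∀ (i j : Fin n),
      S t i j =
        ((((Φ t 0).toBlocks₁₁ + (Φ t 0).toBlocks₁₂ * P 0) * Sig0 *
          ((Φ t 0).toBlocks₁₁ + (Φ t 0).toBlocks₁₂ * P 0)ᵀ) i j) +
        ∫ s in (0:ℝ)..t,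
          ((((Φ t s).toBlocks₁₁ + (Φ t s).toBlocks₁₂ * P s) * (C s * D s * (C s)ᵀ) *
            ((Φ t s).toBlocks₁₁ + (Φ t s).toBlocks₁₂ * P s)ᵀ) i j) := by
  subst hS0
  exact stmt_10_general (continuous_hamiltonian hA hB hQ) hΦ
    (fun t ht => hasDerivWithinAt_matrix_s10.2 <| by
      simpa only [riccati_hamiltonian] using hPric t ht)
    ((hC.matrix_mul hD).matrix_mul hC.matrix_transpose).continuousOn
    (fun t ht => hasDerivWithinAt_matrix_s10.2 <| by
      simpa only [closedLoop_hamiltonian] using hSode t ht)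
end
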